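/- arXiv:1012.5329 — 2 statements merged into one kernel-verified Lean document; each statement's English description precedes it below -/
import Mathlib

section
/- Let C be a clutter with edge ideal I(C) ⊂ R = K[x_1,...,x_n], and let f_1,...,f_r be an induced matching of C with d_i = |f_i| for i = 1,...,r. Then (sum_{i=1}^r d_i) - r ≤ reg(R/I(C)). In particular, for any graph G, the induced matching number im(G) satisfies im(G) ≤ reg(R/I(G)). -/
open MvPolynomial

/-- A clutter on the vertex set `Fin n`: a family of edges, none containing another. -/
structure Clutter (n : ℕ) : Type where
  edges : Finset (Finset (Fin n))
  antichain : ∀ e ∈ edges, ∀ f ∈ edges, e ⊆ f → e = f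

/-- The squarefree monomial `∏_{i ∈ e} xᵢ` associated to a set of vertices. -/
noncomputable def edgeMonomial (K : Type) [Field K] {n : ℕ} (e : Finset (Fin n)) :
    MvPolynomial (Fin n) K :=
  ∏ i ∈ e, X i

/-- The edge ideal of a clutter. -/
noncomputable def Clutter.edgeIdeal (K : Type) [Field K] {n : ℕ} (C : Clutter n) :
    Ideal (MvPolynomial (Fin n) K) :=
  Ideal.span (edgeMonomial K '' ↑C.edges)

/-- A finite graded free resolution of `R/I`, where `R = K[x₁,…,xₙ]`.
`F_i = ⊕_j R(-tw i j)` with `rk i` summands, differentials `δ i : F_{i+1} → F_i`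
given by matrices with homogeneous entries of the correct degrees, exact, and
augmented by a degree-preserving surjection `F₀ → R/I`. -/
structure GFR (n : ℕ) (K : Type) [Field K] (I : Ideal (MvPolynomial (Fin n) K)) : Type where
  len : ℕ
  rk : ℕ → ℕ
  rk_zero : ∀ i, len < i → rk i = 0
  tw : (i : ℕ) → Fin (rk i) → ℕ
  δ : (i : ℕ) → ((Fin (rk (i + 1)) → MvPolynomial (Fin n) K) →ₗ[MvPolynomial (Fin n) K]
        (Fin (rk i) → MvPolynomial (Fin n) K))
  δ_homog : ∀ (i : ℕ) (k : Fin (rk (i + 1))) (j : Fin (rk i)),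
      δ i (Pi.single k 1) j = 0 ∨
        (tw i j ≤ tw (i + 1) k ∧ (δ i (Pi.single k 1) j).IsHomogeneous (tw (i + 1) k - tw i j))
  aug : (Fin (rk 0) → MvPolynomial (Fin n) K) →ₗ[MvPolynomial (Fin n) K] MvPolynomial (Fin n) K
  aug_homog : ∀ j : Fin (rk 0), (aug (Pi.single j 1)).IsHomogeneous (tw 0 j)
  aug_surj : ∀ r : MvPolynomial (Fin n) K, ∃ x, r - aug x ∈ I
  exact_zero : LinearMap.range (δ 0) = Submodule.comap aug I
  exact_succ : ∀ i : ℕ, LinearMap.range (δ (i + 1)) = LinearMap.ker (δ i)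

/-- The Castelnuovo–Mumford regularity of `R/I`:
the least `r` such that `R/I` admits a (finite) graded free resolution all of whose
`i`-th twists are at most `r + i`.  (This value is attained by the minimal graded free
resolution, so it equals `max { j - i : b_{ij}(R/I) ≠ 0 }`.) -/
noncomputable def regR {n : ℕ} {K : Type} [Field K] (I : Ideal (MvPolynomial (Fin n) K)) : ℕ :=
  sInf { r : ℕ | ∃ F : GFR n K I, ∀ (i : ℕ) (j : Fin (F.rk i)), F.tw i j ≤ r + i }

/-- An induced matching of a clutter: pairwise disjoint edges `f 0, …, f (r-1)` such
that the only edges of the clutter contained in their union are the `f i`. -/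
def Clutter.IsInducedMatching {n : ℕ} (C : Clutter n) {r : ℕ}
    (f : Fin r → Finset (Fin n)) : Prop :=
  (∀ i, f i ∈ C.edges) ∧
  (∀ i j, i ≠ j → Disjoint (f i) (f j)) ∧
  (∀ e ∈ C.edges, e ⊆ Finset.univ.biUnion f → ∃ i, e = f i)

/-- The induced matching number of a clutter. -/
noncomputable def imClutter {n : ℕ} (C : Clutter n) : ℕ :=
  sSup { r : ℕ | ∃ f : Fin r → Finset (Fin n), C.IsInducedMatching f }


namespace TaylorRes

variable {K : Type} [Field K] {n m : ℕ}

/-- The part of a polynomial supported on the exponents satisfying `p`. -/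
noncomputable def filt (p : (Fin n →₀ ℕ) → Prop) (f : MvPolynomial (Fin n) K) :
    MvPolynomial (Fin n) K :=
  open Classical in ∑ a ∈ f.support, if p a then monomial a (coeff a f) else 0

lemma coeff_filt_pos {p : (Fin n →₀ ℕ) → Prop} (f : MvPolynomial (Fin n) K) {a : Fin n →₀ ℕ}
    (h : p a) : coeff a (filt p f) = coeff a f := by
  classical
  unfold filt
  rw [coeff_sum, Finset.sum_eq_single a]
  · simp [h]
  · intro b _ hb
    split_ifs <;> simp [coeff_monomial, hb]
  · intro ha
    simp [h, notMem_support_iff.mp ha]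

lemma coeff_filt_neg {p : (Fin n →₀ ℕ) → Prop} (f : MvPolynomial (Fin n) K) {a : Fin n →₀ ℕ}
    (h : ¬ p a) : coeff a (filt p f) = 0 := by
  classical
  unfold filt
  rw [coeff_sum]
  refine Finset.sum_eq_zero fun b _ => ?_
  split_ifs with hb
  · rw [coeff_monomial, if_neg]
    rintro rfl
    exact h hb
  · simp

lemma mem_support_filt {p : (Fin n →₀ ℕ) → Prop} {f : MvPolynomial (Fin n) K} {a : Fin n →₀ ℕ} :
    a ∈ (filt p f).support ↔ p a ∧ a ∈ f.support := by
  by_cases h : p a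
  · simp [mem_support_iff, coeff_filt_pos _ h, h]
  · simp [mem_support_iff, coeff_filt_neg _ h, h]

lemma filt_add (p : (Fin n →₀ ℕ) → Prop) (f g : MvPolynomial (Fin n) K) :
    filt p (f + g) = filt p f + filt p g := by
  ext a
  by_cases h : p a
  · simp [coeff_filt_pos _ h]
  · simp [coeff_filt_neg _ h]

/-- `filt` as an additive map. -/
noncomputable def filtHom (p : (Fin n →₀ ℕ) → Prop) :
    MvPolynomial (Fin n) K →+ MvPolynomial (Fin n) K :=
  AddMonoidHom.mk' (filt p) (filt_add p)

lemma filtHom_apply (p : (Fin n →₀ ℕ) → Prop) (f : MvPolynomial (Fin n) K) :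
    filtHom p f = filt p f := rfl

lemma filt_eq_self {p : (Fin n →₀ ℕ) → Prop} {f : MvPolynomial (Fin n) K}
    (h : ∀ a ∈ f.support, p a) : filt p f = f := by
  ext a
  by_cases ha : p a
  · exact coeff_filt_pos _ ha
  · rw [coeff_filt_neg _ ha]
    by_contra hne
    exact ha (h a (mem_support_iff.mpr (Ne.symm hne)))

lemma filt_eq_zero {p : (Fin n →₀ ℕ) → Prop} {f : MvPolynomial (Fin n) K}
    (h : ∀ a ∈ f.support, ¬ p a) : filt p f = 0 := by
  ext a
  by_cases ha : p a
  · rw [coeff_filt_pos _ ha, coeff_zero]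
    by_contra hne
    exact h a (mem_support_iff.mpr hne) ha
  · rw [coeff_filt_neg _ ha, coeff_zero]

/-- The exponent vector of a squarefree monomial. -/
noncomputable def ind (s : Finset (Fin n)) : Fin n →₀ ℕ := ∑ i ∈ s, Finsupp.single i 1

lemma ind_apply (s : Finset (Fin n)) (i : Fin n) : ind s i = if i ∈ s then 1 else 0 := by
  simp [ind, Finsupp.finsetSum_apply, Finsupp.single_apply]

lemma edgeMonomial_eq (s : Finset (Fin n)) : edgeMonomial K s = monomial (ind s) 1 := by
  simp [edgeMonomial, ind, monomial_sum_one, X]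

lemma ind_le_iff (s : Finset (Fin n)) (a : Fin n →₀ ℕ) : ind s ≤ a ↔ s ⊆ a.support := by
  constructor
  · intro h i hi
    have := h i
    rw [ind_apply, if_pos hi] at this
    rw [Finsupp.mem_support_iff]; omega
  · intro h i
    rw [ind_apply]
    split_ifs with hi
    · have := h hi
      rw [Finsupp.mem_support_iff] at this; omega
    · exact Nat.zero_le _

lemma mem_span_iff (E : Set (Finset (Fin n))) (f : MvPolynomial (Fin n) K) :
    f ∈ Ideal.span (edgeMonomial K '' E) ↔ ∀ a ∈ f.support, ∃ e ∈ E, e ⊆ a.support := by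
  have : edgeMonomial K '' E = (fun s => monomial s (1 : K)) '' (ind '' E) := by
    rw [Set.image_image]
    exact Set.image_congr fun s _ => edgeMonomial_eq s
  rw [this, mem_ideal_span_monomial_image]
  simp [ind_le_iff]

lemma edgeMonomial_dvd_iff (s : Finset (Fin n)) (f : MvPolynomial (Fin n) K) :
    edgeMonomial K s ∣ f ↔ ∀ a ∈ f.support, s ⊆ a.support := by
  rw [← Ideal.mem_span_singleton, ← Set.image_singleton, mem_span_iff]
  simp

lemma edgeMonomial_ne_zero (s : Finset (Fin n)) : edgeMonomial K s ≠ 0 := by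
  rw [edgeMonomial_eq]; simp

lemma edgeMonomial_isHomogeneous (s : Finset (Fin n)) :
    (edgeMonomial K s).IsHomogeneous s.card := by
  have := IsHomogeneous.prod s (fun i => (X i : MvPolynomial (Fin n) K)) (fun _ => 1)
    (fun i _ => isHomogeneous_X K i)
  simpa [edgeMonomial] using this

lemma edgeMonomial_union {s t : Finset (Fin n)} (h : Disjoint s t) :
    edgeMonomial K (s ∪ t) = edgeMonomial K s * edgeMonomial K t := by
  simp [edgeMonomial, Finset.prod_union h]

lemma constantCoeff_edgeMonomial {s : Finset (Fin n)} (h : s.Nonempty) :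
    constantCoeff (edgeMonomial K s) = 0 := by
  obtain ⟨i, hi⟩ := h
  simp only [edgeMonomial, map_prod, constantCoeff_X]
  exact Finset.prod_eq_zero hi rfl

/-! ### The total Taylor complex -/

/-- Union of the edges indexed by `s`. -/
def U (e : Fin m → Finset (Fin n)) (s : Finset (Fin m)) : Finset (Fin n) := s.biUnion e

lemma U_insert (e : Fin m → Finset (Fin n)) (g : Fin m) (s : Finset (Fin m)) :
    U e (insert g s) = e g ∪ U e s := by simp [U, Finset.biUnion_insert]

/-- The sign of `g` relative to `s`. -/
noncomputable def sg (K : Type) [Field K] (n : ℕ) (g : Fin m) (s : Finset (Fin m)) : MvPolynomial (Fin n) K :=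
  (-1) ^ (s.filter (· < g)).card

/-- The coefficient of the total differential. -/
noncomputable def cf (K : Type) [Field K] (e : Fin m → Finset (Fin n)) (g : Fin m)
    (s : Finset (Fin m)) : MvPolynomial (Fin n) K :=
  sg K n g s * edgeMonomial K (e g \ U e s)

/-- The total Taylor differential. -/
noncomputable def D (K : Type) [Field K] (e : Fin m → Finset (Fin n)) :
    (Finset (Fin m) → MvPolynomial (Fin n) K) →ₗ[MvPolynomial (Fin n) K]
      (Finset (Fin m) → MvPolynomial (Fin n) K) :=
  LinearMap.pi fun t => ∑ g ∈ tᶜ, cf K e g t • LinearMap.proj (insert g t)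

lemma D_apply (e : Fin m → Finset (Fin n)) (v : Finset (Fin m) → MvPolynomial (Fin n) K)
    (t : Finset (Fin m)) : D K e v t = ∑ g ∈ tᶜ, cf K e g t * v (insert g t) := by
  simp [D]

lemma sg_insert {g h : Fin m} {s : Finset (Fin m)} (hh : h ∉ s) :
    sg K n g (insert h s) = (if h < g then -1 else 1) * sg K n g s := by
  unfold sg
  rw [Finset.filter_insert]
  split_ifs with hlt
  · rw [Finset.card_insert_of_notMem (by simp [hh]), pow_succ']
  · simp

lemma mon_mul (e : Fin m → Finset (Fin n)) (g : Fin m) (s : Finset (Fin m)) :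
    edgeMonomial K (U e s) * edgeMonomial K (e g \ U e s) = edgeMonomial K (U e (insert g s)) := by
  rw [← edgeMonomial_union Finset.disjoint_sdiff, U_insert]
  congr 1
  rw [Finset.union_sdiff_self_eq_union, Finset.union_comm]

lemma cf_anti (e : Fin m → Finset (Fin n)) {g h : Fin m} {s : Finset (Fin m)} (hg : g ∉ s)
    (hh : h ∉ s) (hgh : g ≠ h) :
    cf K e g s * cf K e h (insert g s) = - (cf K e h s * cf K e g (insert h s)) := by
  have h1 : edgeMonomial K (e g \ U e s) * edgeMonomial K (e h \ U e (insert g s))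
      = edgeMonomial K (e h \ U e s) * edgeMonomial K (e g \ U e (insert h s)) := by
    apply mul_left_cancel₀ (edgeMonomial_ne_zero (K := K) (U e s))
    rw [← mul_assoc, ← mul_assoc, mon_mul, mon_mul, mon_mul, mon_mul, Finset.insert_comm]
  have h2 : sg K n g s * sg K n h (insert g s) = - (sg K n h s * sg K n g (insert h s)) := by
    rw [sg_insert hg, sg_insert hh]
    rcases lt_or_gt_of_ne hgh with hlt | hlt
    · rw [if_pos hlt, if_neg (not_lt.mpr hlt.le)]; ring
    · rw [if_pos hlt, if_neg (not_lt.mpr hlt.le)]; ring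
  unfold cf
  linear_combination (edgeMonomial K (e g \ U e s) * edgeMonomial K (e h \ U e (insert g s))) * h2
    - (sg K n h s * sg K n g (insert h s)) * h1

lemma D_D (e : Fin m → Finset (Fin n)) (v : Finset (Fin m) → MvPolynomial (Fin n) K) :
    D K e (D K e v) = 0 := by
  funext t
  rw [D_apply]
  simp only [D_apply, Finset.mul_sum, Pi.zero_apply]
  rw [Finset.sum_sigma']
  refine Finset.sum_involution (fun x _ => ⟨x.2, x.1⟩) ?_ ?_ ?_ ?_
  · rintro ⟨g, h⟩ hx
    simp only [Finset.mem_sigma, Finset.mem_compl, Finset.mem_insert, not_or] at hx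
    dsimp only
    rw [← mul_assoc, ← mul_assoc, cf_anti e hx.1 hx.2.2 (Ne.symm hx.2.1), Finset.insert_comm]
    ring
  · rintro ⟨g, h⟩ hx _ heq
    simp only [Finset.mem_sigma, Finset.mem_compl, Finset.mem_insert, not_or] at hx
    simp only [Sigma.mk.injEq, heq_eq_eq] at heq
    exact hx.2.1 heq.1
  · rintro ⟨g, h⟩ hx
    simp only [Finset.mem_sigma, Finset.mem_compl, Finset.mem_insert, not_or] at hx ⊢
    exact ⟨hx.2.2, Ne.symm hx.2.1, hx.1⟩
  · rintro ⟨g, h⟩ _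
    rfl

/-- `g` is the first edge contained in the support of `a`. -/
def IsFirst (e : Fin m → Finset (Fin n)) (g : Fin m) (a : Fin n →₀ ℕ) : Prop :=
  e g ⊆ a.support ∧ ∀ g' < g, ¬ e g' ⊆ a.support

lemma IsFirst.unique {e : Fin m → Finset (Fin n)} {g g' : Fin m} {a : Fin n →₀ ℕ}
    (h : IsFirst e g a) (h' : IsFirst e g' a) : g = g' := by
  rcases lt_trichotomy g g' with hlt | heq | hlt
  · exact absurd h.1 (h'.2 g hlt)
  · exact heq
  · exact absurd h'.1 (h.2 g' hlt)

lemma exists_isFirst (e : Fin m → Finset (Fin n)) (a : Fin n →₀ ℕ) (g : Fin m)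
    (h : e g ⊆ a.support) : ∃ g' ≤ g, IsFirst e g' a := by
  classical
  have hne : (Finset.univ.filter fun g => e g ⊆ a.support).Nonempty := ⟨g, by simpa using h⟩
  refine ⟨(Finset.univ.filter fun g => e g ⊆ a.support).min' hne,
    Finset.min'_le _ _ (by simpa using h), ?_, ?_⟩
  · have := Finset.min'_mem _ hne
    simpa using this
  · intro g' hg' hc
    exact absurd (Finset.min'_le _ g' (by simpa using hc)) (not_le.mpr hg')

lemma sum_first (e : Fin m → Finset (Fin n)) (A : Finset (Fin m)) (f : MvPolynomial (Fin n) K)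
    (h : ∀ a ∈ f.support, ∃ g ∈ A, IsFirst e g a) :
    ∑ g ∈ A, filt (IsFirst e g) f = f := by
  ext a
  rw [coeff_sum]
  by_cases ha : a ∈ f.support
  · obtain ⟨g, hg, hga⟩ := h a ha
    rw [Finset.sum_eq_single g]
    · exact coeff_filt_pos _ hga
    · intro b _ hb
      exact coeff_filt_neg _ fun hc => hb (hc.unique hga)
    · exact fun hc => absurd hg hc
  · rw [notMem_support_iff.mp ha]
    refine Finset.sum_eq_zero fun g _ => ?_
    by_contra hc
    exact ha (mem_support_filt.mp (mem_support_iff.mpr hc)).2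

lemma filt_sg (p : (Fin n →₀ ℕ) → Prop) (g : Fin m) (s : Finset (Fin m))
    (f : MvPolynomial (Fin n) K) : filt p (sg K n g s * f) = sg K n g s * filt p f := by
  unfold sg
  rcases neg_one_pow_eq_or (MvPolynomial (Fin n) K) (s.filter (· < g)).card with h | h
  · rw [h]; simp
  · rw [h]
    simp only [neg_mul, one_mul]
    exact map_neg (filtHom p) f

lemma exists_split (t : Finset (Fin m)) (ht : t.Nonempty) :
    ∃ mn t', t = insert mn t' ∧ mn ∉ t' ∧ ∀ x ∈ t', mn < x := by
  refine ⟨t.min' ht, t.erase (t.min' ht), (Finset.insert_erase (Finset.min'_mem _ _)).symm,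
    Finset.notMem_erase _ _, fun x hx => ?_⟩
  exact Finset.min'_lt_of_mem_erase_min' _ ht hx

lemma sg_of_lt {g : Fin m} {s : Finset (Fin m)} (h : ∀ x ∈ s, g < x) : sg K n g s = 1 := by
  unfold sg
  rw [Finset.filter_eq_empty_iff.mpr]
  · simp
  · intro x hx
    exact not_lt.mpr (h x hx).le

lemma exists_W (V : Finset (Fin m) → MvPolynomial (Fin n) K) (e : Fin m → Finset (Fin n)) :
    ∃ W : Finset (Fin m) → MvPolynomial (Fin n) K, W ∅ = 0 ∧
      ∀ g s, g ∉ s → (∀ x ∈ s, g < x) → W (insert g s) = filt (IsFirst e g) (V s) := by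
  refine ⟨fun s => if h : s.Nonempty then
    filt (IsFirst e (s.min' h)) (V (s.erase (s.min' h))) else 0, by simp, ?_⟩
  intro g s hg hs
  have hm : (insert g s).min' (Finset.insert_nonempty g s) = g := by
    apply le_antisymm
    · exact Finset.min'_le _ _ (Finset.mem_insert_self _ _)
    · apply Finset.le_min'
      intro y hy
      rcases Finset.mem_insert.mp hy with rfl | hy
      · exact le_rfl
      · exact (hs y hy).le
  dsimp only
  rw [dif_pos (Finset.insert_nonempty g s), hm, Finset.erase_insert hg]

lemma D_mul (e : Fin m → Finset (Fin n)) (v : Finset (Fin m) → MvPolynomial (Fin n) K)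
    (t : Finset (Fin m)) : edgeMonomial K (U e t) * D K e v t =
      ∑ g ∈ tᶜ, sg K n g t * (edgeMonomial K (U e (insert g t)) * v (insert g t)) := by
  rw [D_apply, Finset.mul_sum]
  refine Finset.sum_congr rfl fun g _ => ?_
  rw [← mon_mul, cf]
  ring

lemma D_exact (e : Fin m → Finset (Fin n)) (v : Finset (Fin m) → MvPolynomial (Fin n) K)
    (hv : D K e v = 0) (h0 : v ∅ ∈ Ideal.span (edgeMonomial K '' Set.range e)) (i : ℕ)
    (hi : ∀ s, s.card ≠ i → v s = 0) :
    ∃ w, D K e w = v ∧ ∀ s, s.card ≠ i + 1 → w s = 0 := by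
  obtain ⟨W, W0, hW⟩ := exists_W (fun s => edgeMonomial K (U e s) * v s) e
  have hdvd : ∀ s, edgeMonomial K (U e s) ∣ W s := by
    intro s
    rcases s.eq_empty_or_nonempty with rfl | hs
    · rw [W0]; exact dvd_zero _
    · obtain ⟨g, s', rfl, hg, hlt⟩ := exists_split s hs
      rw [hW g s' hg hlt, edgeMonomial_dvd_iff]
      intro a ha
      obtain ⟨h1, h2⟩ := mem_support_filt.mp ha
      rw [U_insert]
      exact Finset.union_subset h1.1 ((edgeMonomial_dvd_iff _ _).mp (dvd_mul_right _ _) a h2)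
  choose w hw using hdvd
  refine ⟨w, ?_, ?_⟩
  · funext t
    apply mul_left_cancel₀ (edgeMonomial_ne_zero (K := K) (U e t))
    rw [D_mul]
    simp only [← hw]
    rcases t.eq_empty_or_nonempty with rfl | ht
    · have : ∀ g ∈ (∅ : Finset (Fin m))ᶜ, sg K n g ∅ * W (insert g ∅)
          = filt (IsFirst e g) (edgeMonomial K (U e ∅) * v ∅) := by
        intro g _
        rw [sg_of_lt (by simp), hW g ∅ (by simp) (by simp), one_mul]
      rw [Finset.sum_congr rfl this]
      apply sum_first
      intro a ha
      have hmem : edgeMonomial K (U e ∅) * v ∅ ∈ Ideal.span (edgeMonomial K '' Set.range e) :=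
        Ideal.mul_mem_left _ _ h0
      obtain ⟨_, ⟨g, rfl⟩, hg⟩ := (mem_span_iff _ _).mp hmem a ha
      obtain ⟨g', _, hg'⟩ := exists_isFirst e a g hg
      exact ⟨g', by simp, hg'⟩
    · obtain ⟨mn, t', rfl, hmn, hlt⟩ := exists_split t ht
      have hD := D_mul e v t'
      rw [hv, Pi.zero_apply, mul_zero] at hD
      have hc : t'ᶜ = insert mn (insert mn t')ᶜ := by
        ext x
        simp only [Finset.mem_compl, Finset.mem_insert, not_or]
        constructor
        · intro hx
          by_cases hxm : x = mn
          · exact Or.inl hxm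
          · exact Or.inr ⟨hxm, hx⟩
        · rintro (rfl | hx)
          · exact hmn
          · exact hx.2
      rw [hc, Finset.sum_insert (by simp), sg_of_lt hlt, one_mul] at hD
      have hD2 := congrArg (filtHom (IsFirst e mn)) hD
      rw [map_zero, map_add, map_sum] at hD2
      simp only [filtHom_apply, filt_sg] at hD2
      have hterm : ∀ g ∈ (insert mn t')ᶜ, sg K n g (insert mn t') * W (insert g (insert mn t'))
          = (if g < mn then filt (IsFirst e g)
              (edgeMonomial K (U e (insert mn t')) * v (insert mn t')) else 0)
            - sg K n g t' * filt (IsFirst e mn)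
              (edgeMonomial K (U e (insert g t')) * v (insert g t')) := by
        intro g hg
        simp only [Finset.mem_compl, Finset.mem_insert, not_or] at hg
        by_cases hgm : g < mn
        · have hall : ∀ x ∈ insert mn t', g < x := by
            intro x hx
            rcases Finset.mem_insert.mp hx with rfl | hx
            · exact hgm
            · exact hgm.trans (hlt x hx)
          have hz : filt (IsFirst e mn)
              (edgeMonomial K (U e (insert g t')) * v (insert g t')) = 0 := by
            apply filt_eq_zero
            intro a ha hf
            have := (edgeMonomial_dvd_iff _ _).mp (dvd_mul_right _ _) a ha
            rw [U_insert] at this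
            exact hf.2 g hgm (Finset.subset_union_left.trans this)
          rw [sg_of_lt hall, hW g _ (by simp [hg]) hall, if_pos hgm, hz]
          ring
        · have hmg : mn < g := lt_of_le_of_ne (not_lt.mp hgm) (Ne.symm hg.1)
          have hall : ∀ x ∈ insert g t', mn < x := by
            intro x hx
            rcases Finset.mem_insert.mp hx with rfl | hx
            · exact hmg
            · exact hlt x hx
          rw [Finset.insert_comm, hW mn _ (by simp [hmn, Ne.symm hg.1]) hall, if_neg hgm,
            sg_insert hmn, if_pos hmg]
          ring
      rw [Finset.sum_congr rfl hterm, Finset.sum_sub_distrib, ← Finset.sum_filter]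
      have hI : (insert mn t')ᶜ.filter (· < mn) = Finset.Iio mn := by
        ext x
        simp only [Finset.mem_filter, Finset.mem_compl, Finset.mem_insert, Finset.mem_Iio, not_or]
        constructor
        · exact fun h => h.2
        · exact fun h => ⟨⟨h.ne, fun hx => absurd (hlt x hx) (not_lt.mpr h.le)⟩, h⟩
      rw [hI]
      have hS := sum_first e (Finset.Iic mn)
        (edgeMonomial K (U e (insert mn t')) * v (insert mn t')) (by
          intro a ha
          have := (edgeMonomial_dvd_iff _ _).mp (dvd_mul_right _ _) a ha
          rw [U_insert] at this
          obtain ⟨g', hle, hg'⟩ := exists_isFirst e a mn (Finset.subset_union_left.trans this)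
          exact ⟨g', by simpa using hle, hg'⟩)
      have hI2 : Finset.Iic mn = insert mn (Finset.Iio mn) := by
        ext x; simp [le_iff_eq_or_lt]
      rw [hI2, Finset.sum_insert (by simp)] at hS
      linear_combination hS + hD2
  · intro s hs
    have hWs : W s = 0 := by
      rcases s.eq_empty_or_nonempty with rfl | hne
      · exact W0
      · obtain ⟨g, s', rfl, hg, hlt⟩ := exists_split s hne
        rw [hW g s' hg hlt, hi s', mul_zero]
        · exact map_zero (filtHom (IsFirst e g))
        · intro hc
          exact hs (by rw [Finset.card_insert_of_notMem hg, hc])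
    have := hw s
    rw [hWs] at this
    exact (mul_eq_zero.mp this.symm).resolve_left (edgeMonomial_ne_zero _)

/-! ### The graded pieces -/

/-- Index set of the `i`-th Taylor module. -/
abbrev Idx (m i : ℕ) : Type := {s : Finset (Fin m) // s.card = i}

/-- The `i`-th Taylor module. -/
abbrev T (K : Type) [Field K] (n m i : ℕ) : Type := Idx m i → MvPolynomial (Fin n) K

/-- Extension by zero. -/
noncomputable def ext (K : Type) [Field K] (n m i : ℕ) : T K n m i →ₗ[MvPolynomial (Fin n) K]
    (Finset (Fin m) → MvPolynomial (Fin n) K) :=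
  LinearMap.pi fun s => if h : s.card = i then LinearMap.proj ⟨s, h⟩ else 0

/-- Restriction. -/
noncomputable def res (K : Type) [Field K] (n m i : ℕ) :
    (Finset (Fin m) → MvPolynomial (Fin n) K) →ₗ[MvPolynomial (Fin n) K] T K n m i :=
  LinearMap.pi fun s => LinearMap.proj s.1

lemma ext_pos {i : ℕ} (v : T K n m i) {s : Finset (Fin m)} (h : s.card = i) :
    ext K n m i v s = v ⟨s, h⟩ := by
  simp [ext, h]

lemma ext_neg {i : ℕ} (v : T K n m i) {s : Finset (Fin m)} (h : s.card ≠ i) :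
    ext K n m i v s = 0 := by
  simp [ext, h]

lemma res_apply {i : ℕ} (v : Finset (Fin m) → MvPolynomial (Fin n) K) (s : Idx m i) :
    res K n m i v s = v s.1 := rfl

lemma res_ext {i : ℕ} (v : T K n m i) : res K n m i (ext K n m i v) = v := by
  funext s
  rw [res_apply, ext_pos v s.2]

lemma ext_res {i : ℕ} (v : Finset (Fin m) → MvPolynomial (Fin n) K)
    (h : ∀ s, s.card ≠ i → v s = 0) : ext K n m i (res K n m i v) = v := by
  funext s
  by_cases hs : s.card = i
  · rw [ext_pos _ hs, res_apply]
  · rw [ext_neg _ hs, h s hs]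

/-- The Taylor differential. -/
noncomputable def d (K : Type) [Field K] (e : Fin m → Finset (Fin n)) (i : ℕ) :
    T K n m (i + 1) →ₗ[MvPolynomial (Fin n) K] T K n m i :=
  res K n m i ∘ₗ D K e ∘ₗ ext K n m (i + 1)

lemma d_apply (e : Fin m → Finset (Fin n)) (i : ℕ) (v : T K n m (i + 1)) (t : Idx m i) :
    d K e i v t = ∑ g ∈ t.1ᶜ, cf K e g t.1 * ext K n m (i + 1) v (insert g t.1) := by
  simp only [d, LinearMap.comp_apply, res_apply, D_apply]

lemma ext_d (e : Fin m → Finset (Fin n)) (i : ℕ) (v : T K n m (i + 1)) :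
    ext K n m i (d K e i v) = D K e (ext K n m (i + 1) v) := by
  simp only [d, LinearMap.comp_apply]
  apply ext_res
  intro s hs
  rw [D_apply]
  refine Finset.sum_eq_zero fun g hg => ?_
  rw [ext_neg, mul_zero]
  rw [Finset.card_insert_of_notMem (Finset.mem_compl.mp hg)]
  omega

lemma d_d (e : Fin m → Finset (Fin n)) (i : ℕ) (v : T K n m (i + 1 + 1)) :
    d K e i (d K e (i + 1) v) = 0 := by
  rw [← res_ext (d K e i _), ext_d, ext_d, D_D, map_zero]

lemma d_exact (e : Fin m → Finset (Fin n)) (i : ℕ) (v : T K n m (i + 1)) (h : d K e i v = 0) :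
    ∃ w, d K e (i + 1) w = v := by
  obtain ⟨w, hw, hs⟩ := D_exact e (ext K n m (i + 1) v) (by rw [← ext_d, h, map_zero])
    (by rw [ext_neg v (by simp)]; exact zero_mem _) (i + 1) (fun s hs => ext_neg v hs)
  refine ⟨res K n m (i + 1 + 1) w, ?_⟩
  rw [← res_ext (d K e (i + 1) _), ext_d, ext_res w hs, hw, res_ext]

/-- The empty index. -/
def emp (m : ℕ) : Idx m 0 := ⟨∅, rfl⟩

lemma eq_emp (s : Idx m 0) : s = emp m := Subtype.ext (Finset.card_eq_zero.mp s.2)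

lemma d_exact0 (e : Fin m → Finset (Fin n)) (v : T K n m 0) :
    (∃ w, d K e 0 w = v) ↔ v (emp m) ∈ Ideal.span (edgeMonomial K '' Set.range e) := by
  constructor
  · rintro ⟨w, rfl⟩
    rw [d_apply]
    refine Ideal.sum_mem _ fun g _ => Ideal.mul_mem_right _ _ ?_
    refine Ideal.mul_mem_left _ _ (Ideal.subset_span ⟨e g, ⟨g, rfl⟩, ?_⟩)
    simp [U, emp]
  · intro h
    obtain ⟨w, hw, hs⟩ := D_exact e (ext K n m 0 v) (by
        funext t
        rw [D_apply]
        refine Finset.sum_eq_zero fun g hg => ?_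
        rw [ext_neg, mul_zero]
        rw [Finset.card_insert_of_notMem (Finset.mem_compl.mp hg)]
        omega)
      (by rw [ext_pos v rfl]; exact h) 0 (fun s hs => ext_neg v hs)
    refine ⟨res K n m (0 + 1) w, ?_⟩
    rw [← res_ext (d K e 0 _), ext_d, ext_res w hs, hw, res_ext]

lemma d_single (e : Fin m → Finset (Fin n)) (i : ℕ) (k : Idx m (i + 1)) (t : Idx m i) :
    d K e i (Pi.single k 1) t = 0 ∨
      ∃ g, g ∉ t.1 ∧ insert g t.1 = k.1 ∧ d K e i (Pi.single k 1) t = cf K e g t.1 := by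
  by_cases h : ∃ g, g ∉ t.1 ∧ insert g t.1 = k.1
  · right
    obtain ⟨g, hg, hk⟩ := h
    refine ⟨g, hg, hk, ?_⟩
    rw [d_apply, Finset.sum_eq_single g]
    · rw [ext_pos _ (by rw [hk]; exact k.2)]
      simp [hk]
    · intro b hb hbg
      by_cases hc : (insert b t.1).card = i + 1
      · rw [ext_pos _ hc, Pi.single_eq_of_ne, mul_zero]
        intro heq
        have h1 : insert b t.1 = insert g t.1 := (congrArg Subtype.val heq).trans hk.symm
        have h2 : b ∈ insert g t.1 := h1 ▸ Finset.mem_insert_self b t.1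
        rcases Finset.mem_insert.mp h2 with h3 | h3
        · exact hbg h3
        · exact Finset.mem_compl.mp hb h3
      · rw [ext_neg _ hc, mul_zero]
    · intro hc
      exact absurd (Finset.mem_compl.mpr hg) hc
  · left
    rw [d_apply]
    refine Finset.sum_eq_zero fun g hg => ?_
    by_cases hc : (insert g t.1).card = i + 1
    · rw [ext_pos _ hc, Pi.single_eq_of_ne, mul_zero]
      intro heq
      exact h ⟨g, Finset.mem_compl.mp hg, congrArg Subtype.val heq⟩
    · rw [ext_neg _ hc, mul_zero]

lemma cf_isHomogeneous (e : Fin m → Finset (Fin n)) (g : Fin m) (s : Finset (Fin m)) :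
    (cf K e g s).IsHomogeneous (e g \ U e s).card := by
  unfold cf sg
  have h := edgeMonomial_isHomogeneous (K := K) (e g \ U e s)
  rcases neg_one_pow_eq_or (MvPolynomial (Fin n) K) (s.filter (· < g)).card with h1 | h1
  · rw [h1, one_mul]; exact h
  · rw [h1, neg_one_mul]; exact h.neg

lemma card_U_insert (e : Fin m → Finset (Fin n)) (g : Fin m) (s : Finset (Fin m)) :
    (U e (insert g s)).card = (e g \ U e s).card + (U e s).card := by
  rw [U_insert, Finset.card_sdiff_add_card]

/-- Numbering of the index set. -/
noncomputable def eps (m i : ℕ) : Fin (Fintype.card (Idx m i)) ≃ Idx m i :=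
  (Fintype.equivFin _).symm

/-- Reindexing of the Taylor modules. -/
noncomputable def L (K : Type) [Field K] (n m i : ℕ) : T K n m i ≃ₗ[MvPolynomial (Fin n) K]
    (Fin (Fintype.card (Idx m i)) → MvPolynomial (Fin n) K) :=
  LinearEquiv.funCongrLeft _ _ (eps m i)

lemma L_apply (i : ℕ) (v : T K n m i) (j) : L K n m i v j = v (eps m i j) := rfl

lemma L_symm_single (i : ℕ) (k) :
    (L K n m i).symm (Pi.single k 1) = Pi.single (eps m i k) 1 := by
  rw [LinearEquiv.symm_apply_eq]
  funext j
  rw [L_apply]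
  simp [Pi.single_apply]

/-- The Taylor resolution as a graded free resolution. -/
noncomputable def taylorGFR (e : Fin m → Finset (Fin n)) :
    GFR n K (Ideal.span (edgeMonomial K '' Set.range e)) where
  len := m
  rk i := Fintype.card (Idx m i)
  rk_zero i hi := by
    rw [Fintype.card_eq_zero_iff]
    refine ⟨fun s => ?_⟩
    have := Finset.card_le_univ s.1
    rw [s.2, Fintype.card_fin] at this
    omega
  tw i j := (U e (eps m i j).1).card
  δ i := (L K n m i).toLinearMap ∘ₗ d K e i ∘ₗ (L K n m (i + 1)).symm.toLinearMap
  δ_homog i k j := by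
    simp only [LinearMap.comp_apply, LinearEquiv.coe_coe, L_symm_single, L_apply]
    rcases d_single (K := K) e i (eps m (i + 1) k) (eps m i j) with h | ⟨g, _, hk, h⟩
    · exact Or.inl h
    · right
      rw [h, ← hk, card_U_insert]
      refine ⟨Nat.le_add_left _ _, ?_⟩
      rw [Nat.add_sub_cancel]
      exact cf_isHomogeneous e g _
  aug := LinearMap.proj (emp m) ∘ₗ (L K n m 0).symm.toLinearMap
  aug_homog j := by
    simp only [LinearMap.comp_apply, LinearEquiv.coe_coe, L_symm_single, LinearMap.proj_apply,
      eq_emp (eps m 0 j), Pi.single_eq_same]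
    simpa [emp, U] using isHomogeneous_one (Fin n) K
  aug_surj r := by
    refine ⟨L K n m 0 (fun _ => r), ?_⟩
    simp
  exact_zero := by
    ext x
    simp only [LinearMap.mem_range, LinearMap.comp_apply, LinearEquiv.coe_coe, Submodule.mem_comap,
      LinearMap.proj_apply]
    rw [← d_exact0]
    constructor
    · rintro ⟨y, rfl⟩
      exact ⟨(L K n m 1).symm y, by simp⟩
    · rintro ⟨w, hw⟩
      exact ⟨L K n m 1 w, by rw [LinearEquiv.symm_apply_apply, hw, LinearEquiv.apply_symm_apply]⟩
  exact_succ i := by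
    ext x
    simp only [LinearMap.mem_range, LinearMap.comp_apply, LinearEquiv.coe_coe, LinearMap.mem_ker]
    constructor
    · rintro ⟨y, rfl⟩
      rw [LinearEquiv.symm_apply_apply, d_d, map_zero]
    · intro h
      obtain ⟨w, hw⟩ := d_exact e i ((L K n m (i + 1)).symm x)
        ((LinearEquiv.map_eq_zero_iff _).mp h)
      exact ⟨L K n m (i + 1 + 1) w,
        by rw [LinearEquiv.symm_apply_apply, hw, LinearEquiv.apply_symm_apply]⟩

lemma taylorGFR_tw (e : Fin m → Finset (Fin n)) (i : ℕ) (j) :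
    (taylorGFR (K := K) e).tw i j ≤ n + i := by
  have := Finset.card_le_univ (U e (eps m i j).1)
  rw [Fintype.card_fin] at this
  exact le_trans this (Nat.le_add_right _ _)

/-! ### Comparison of resolutions -/

lemma exists_seq {X : ℕ → Type} (Q : ∀ i, X i → Prop) (R : ∀ i, X i → X (i + 1) → Prop)
    (x0 : X 0) (h0 : Q 0 x0) (hs : ∀ i x, Q i x → ∃ y, Q (i + 1) y ∧ R i x y) :
    ∃ s : ∀ i, X i, s 0 = x0 ∧ (∀ i, Q i (s i)) ∧ ∀ i, R i (s i) (s (i + 1)) := by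
  choose f hf1 hf2 using hs
  let s : ∀ i, {x : X i // Q i x} :=
    fun i => Nat.rec ⟨x0, h0⟩ (fun i x => ⟨f i x.1 x.2, hf1 i x.1 x.2⟩) i
  exact ⟨fun i => (s i).1, rfl, fun i => (s i).2, fun i => hf2 i (s i).1 (s i).2⟩

lemma exists_lift {R : Type} [CommRing R] {ι : Type} [Fintype ι] [DecidableEq ι] {N M : Type}
    [AddCommGroup N] [Module R N] [AddCommGroup M] [Module R M]
    (a : (ι → R) →ₗ[R] M) (b : N →ₗ[R] M) (P : ι → N → Prop)
    (h : ∀ k, ∃ y, b y = a (Pi.single k 1) ∧ P k y) :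
    ∃ c : (ι → R) →ₗ[R] N, (∀ v, b (c v) = a v) ∧ ∀ k, P k (c (Pi.single k 1)) := by
  choose y hy1 hy2 using h
  have hc : ∀ k, ((Pi.basisFun R ι).constr R y : (ι → R) →ₗ[R] N) (Pi.single k 1) = y k := by
    intro k
    have := (Pi.basisFun R ι).constr_basis R y k
    rwa [Pi.basisFun_apply] at this
  refine ⟨(Pi.basisFun R ι).constr R y, fun v => ?_, fun k => ?_⟩
  · have : b ∘ₗ ((Pi.basisFun R ι).constr R y : (ι → R) →ₗ[R] N) = a := by
      apply (Pi.basisFun R ι).ext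
      intro k
      rw [Pi.basisFun_apply, LinearMap.comp_apply, hc, hy1]
    exact LinearMap.congr_fun this v
  · rw [hc]; exact hy2 k

lemma map_eq_sum {R : Type} [CommRing R] {ι : Type} [Fintype ι] [DecidableEq ι]
    {M : Type} [AddCommGroup M] [Module R M] (a : (ι → R) →ₗ[R] M) (v : ι → R) :
    a v = ∑ k, v k • a (Pi.single k 1) := by
  conv_lhs => rw [pi_eq_sum_univ' v]
  rw [map_sum]
  refine Finset.sum_congr rfl fun k _ => ?_
  rw [map_smul]

lemma filt_mul {s t Dg : ℕ} (p q : MvPolynomial (Fin n) K)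
    (h : ∀ b ∈ q.support, b.degree + t = s) :
    filt (fun a => a.degree + t = Dg) (p * q) = filt (fun a => a.degree + s = Dg) p * q := by
  classical
  ext c
  rw [coeff_mul]
  by_cases hc : c.degree + t = Dg
  · rw [coeff_filt_pos _ hc, coeff_mul]
    refine Finset.sum_congr rfl fun x hx => ?_
    by_cases hq : x.2 ∈ q.support
    · rw [coeff_filt_pos]
      have := h _ hq
      rw [← Finset.HasAntidiagonal.mem_antidiagonal.mp hx, map_add] at hc
      omega
    · rw [notMem_support_iff.mp hq, mul_zero, mul_zero]
  · rw [coeff_filt_neg _ hc]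
    symm
    refine Finset.sum_eq_zero fun x hx => ?_
    by_cases hq : x.2 ∈ q.support
    · rw [coeff_filt_neg, zero_mul]
      have := h _ hq
      rw [← Finset.HasAntidiagonal.mem_antidiagonal.mp hx, map_add] at hc
      omega
    · rw [notMem_support_iff.mp hq, mul_zero]

/-- Homogeneous elements of degree `Dg` of a graded free module. -/
def HomD {ι : Type} (tw : ι → ℕ) (Dg : ℕ) (v : ι → MvPolynomial (Fin n) K) : Prop :=
  ∀ j, ∀ a ∈ (v j).support, a.degree + tw j = Dg

/-- Homogeneous component. -/
noncomputable def cmp {ι : Type} (tw : ι → ℕ) (Dg : ℕ) (v : ι → MvPolynomial (Fin n) K) :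
    ι → MvPolynomial (Fin n) K :=
  fun j => filt (fun a => a.degree + tw j = Dg) (v j)

lemma cmp_homD {ι : Type} (tw : ι → ℕ) (Dg : ℕ) (v : ι → MvPolynomial (Fin n) K) :
    HomD tw Dg (cmp tw Dg v) := fun _ _ ha => (mem_support_filt.mp ha).1

lemma map_cmp {ι : Type} [Fintype ι] [DecidableEq ι] (tw : ι → ℕ) (t Dg : ℕ)
    (M : (ι → MvPolynomial (Fin n) K) →ₗ[MvPolynomial (Fin n) K] MvPolynomial (Fin n) K)
    (hM : ∀ k, ∀ b ∈ (M (Pi.single k 1)).support, b.degree + t = tw k)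
    (v : ι → MvPolynomial (Fin n) K) :
    M (cmp tw Dg v) = filt (fun a => a.degree + t = Dg) (M v) := by
  rw [map_eq_sum M, map_eq_sum M v, ← filtHom_apply, map_sum]
  refine Finset.sum_congr rfl fun k _ => ?_
  rw [filtHom_apply, smul_eq_mul, smul_eq_mul, filt_mul _ _ (hM k)]
  rfl

lemma degree_of_isHomogeneous {p : MvPolynomial (Fin n) K} {k : ℕ} (h : p.IsHomogeneous k)
    {a : Fin n →₀ ℕ} (ha : a ∈ p.support) : a.degree = k := by
  have := h (mem_support_iff.mp ha)
  rw [Finsupp.degree_eq_weight_one]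
  exact this

lemma HomD.sum {ι κ : Type} {tw : ι → ℕ} {Dg : ℕ} {s : Finset κ}
    {v : κ → ι → MvPolynomial (Fin n) K} (h : ∀ k ∈ s, HomD tw Dg (v k)) :
    HomD tw Dg (∑ k ∈ s, v k) := by
  classical
  intro j a ha
  by_contra hne
  rw [mem_support_iff, Finset.sum_apply, coeff_sum] at ha
  refine ha (Finset.sum_eq_zero fun k hk => ?_)
  by_contra hc
  exact hne (h k hk j a (mem_support_iff.mpr hc))

lemma HomD.smul {ι : Type} {tw : ι → ℕ} {Dg k : ℕ}
    {v : ι → MvPolynomial (Fin n) K} (h : HomD tw Dg v) {p : MvPolynomial (Fin n) K}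
    (hp : p.IsHomogeneous k) : HomD tw (k + Dg) (p • v) := by
  classical
  intro j a ha
  rw [Pi.smul_apply, smul_eq_mul] at ha
  obtain ⟨b, hb, c, hc, rfl⟩ := Finset.mem_add.mp (support_mul _ _ ha)
  rw [map_add, degree_of_isHomogeneous hp hb, ← h j c hc]
  ring

lemma HomD.zero {ι : Type} (tw : ι → ℕ) (Dg : ℕ) :
    HomD tw Dg (0 : ι → MvPolynomial (Fin n) K) := by
  intro j a ha
  simp at ha

lemma gfr_hom_preimage {I : Ideal (MvPolynomial (Fin n) K)} (F : GFR n K I) (i Dg : ℕ)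
    (y : Fin (F.rk i) → MvPolynomial (Fin n) K) (hy : HomD (F.tw i) Dg y)
    (hr : ∃ x, F.δ i x = y) : ∃ x, F.δ i x = y ∧ HomD (F.tw (i + 1)) Dg x := by
  obtain ⟨x, rfl⟩ := hr
  refine ⟨cmp (F.tw (i + 1)) Dg x, ?_, cmp_homD _ _ _⟩
  funext j
  have := map_cmp (F.tw (i + 1)) (F.tw i j) Dg (LinearMap.proj j ∘ₗ F.δ i) (by
    intro k b hb
    simp only [LinearMap.comp_apply, LinearMap.proj_apply] at hb
    rcases F.δ_homog i k j with h | ⟨hle, h⟩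
    · rw [h] at hb; simp at hb
    · rw [degree_of_isHomogeneous h hb]; omega) x
  simp only [LinearMap.comp_apply, LinearMap.proj_apply] at this
  rw [this]
  exact filt_eq_self (hy j)

lemma gfr_hom_unit {I : Ideal (MvPolynomial (Fin n) K)} (F : GFR n K I)
    (hI : ∀ p f, f ∈ I → filt p f ∈ I) :
    ∃ x, 1 - F.aug x ∈ I ∧ HomD (F.tw 0) 0 x := by
  obtain ⟨x, hx⟩ := F.aug_surj 1
  refine ⟨cmp (F.tw 0) 0 x, ?_, cmp_homD _ _ _⟩
  rw [map_cmp (F.tw 0) 0 0 F.aug (fun k b hb => by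
    rw [degree_of_isHomogeneous (F.aug_homog k) hb, add_zero]) x]
  have h1 : filt (fun a : Fin n →₀ ℕ => a.degree + 0 = 0) (1 : MvPolynomial (Fin n) K) = 1 := by
    apply filt_eq_self
    intro a ha
    rw [degree_of_isHomogeneous (isHomogeneous_one (Fin n) K) ha]
  have := hI (fun a => a.degree + 0 = 0) _ hx
  rw [← filtHom_apply, map_sub, filtHom_apply, filtHom_apply, h1] at this
  exact this

lemma filt_mem_span (E : Set (Finset (Fin n))) (p : (Fin n →₀ ℕ) → Prop)
    (f : MvPolynomial (Fin n) K) (h : f ∈ Ideal.span (edgeMonomial K '' E)) :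
    filt p f ∈ Ideal.span (edgeMonomial K '' E) := by
  rw [mem_span_iff] at h ⊢
  exact fun a ha => h a (mem_support_filt.mp ha).2

lemma constantCoeff_map {ι κ : Type} [Fintype ι] [DecidableEq ι]
    (M : (ι → MvPolynomial (Fin n) K) →ₗ[MvPolynomial (Fin n) K] (κ → MvPolynomial (Fin n) K))
    (v : ι → MvPolynomial (Fin n) K) (hv : ∀ k, constantCoeff (v k) = 0) (j : κ) :
    constantCoeff (M v j) = 0 := by
  rw [map_eq_sum M, Finset.sum_apply, map_sum]
  refine Finset.sum_eq_zero fun k _ => ?_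
  rw [Pi.smul_apply, smul_eq_mul, map_mul, hv, zero_mul]

lemma lower_bound (e : Fin m → Finset (Fin n))
    (F : GFR n K (Ideal.span (edgeMonomial K '' Set.range e))) (r : ℕ) (S : Idx m (r + 1))
    (hne : ∀ g ∈ S.1, (e g).Nonempty) (hdisj : ∀ g ∈ S.1, ∀ h ∈ S.1, g ≠ h → Disjoint (e g) (e h))
    (hind : ∀ g ∉ S.1, ¬ e g ⊆ U e S.1)
    (hlt : ∀ j, F.tw (r + 1) j < (U e S.1).card) : False := by
  -- the chain map from the Taylor complex to `F`
  obtain ⟨x0, hx0, hx0h⟩ := gfr_hom_unit F (filt_mem_span _)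
  obtain ⟨p0, hp0, hp0'⟩ := exists_lift (R := MvPolynomial (Fin n) K) (ι := Idx m 0)
    (N := Fin (F.rk 0) → MvPolynomial (Fin n) K) (M := PUnit) 0 0
    (fun _ y => y = x0) (fun k => ⟨x0, rfl, rfl⟩)
  have hp0aug : ∀ v : T K n m 0, v (emp m) - F.aug (p0 v) ∈
      Ideal.span (edgeMonomial K '' Set.range e) := by
    intro v
    have hv : v = v (emp m) • Pi.single (emp m) 1 := by
      funext s
      rw [eq_emp s]; simp
    have h2 : F.aug (p0 v) = v (emp m) * F.aug x0 := by
      conv_lhs => rw [hv]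
      rw [map_smul, map_smul, hp0', smul_eq_mul]
    rw [h2]
    have := Ideal.mul_mem_left _ (v (emp m)) hx0
    rwa [mul_sub, mul_one] at this
  obtain ⟨p, hpz, hpQ, hpR⟩ := exists_seq
    (X := fun i => T K n m i →ₗ[MvPolynomial (Fin n) K]
      (Fin (F.rk i) → MvPolynomial (Fin n) K))
    (fun i q => (∀ v, ∃ x, F.δ i x = q (d K e i v)) ∧
      ∀ s, HomD (F.tw i) (U e s.1).card (q (Pi.single s 1)))
    (fun i q q' => ∀ v, F.δ i (q' v) = q (d K e i v)) p0
    (by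
      refine ⟨fun v => ?_, fun s => ?_⟩
      · rw [← LinearMap.mem_range, F.exact_zero, Submodule.mem_comap]
        have h1 := hp0aug (d K e 0 v)
        have h2 := (d_exact0 e _).mp ⟨v, rfl⟩
        have := Ideal.sub_mem _ h2 h1
        rwa [sub_sub_cancel] at this
      · rw [hp0', eq_emp s]
        simpa [emp, U] using hx0h)
    (by
      rintro i q ⟨hq1, hq2⟩
      obtain ⟨c, hc1, hc2⟩ := exists_lift (q ∘ₗ d K e i) (F.δ i)
        (fun s y => HomD (F.tw (i + 1)) (U e s.1).card y) (by
          intro s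
          apply gfr_hom_preimage F i _ _ _ (hq1 _)
          rw [map_eq_sum q]
          apply HomD.sum
          intro t _
          rcases d_single (K := K) e i s t with h | ⟨g, _, hk, h⟩
          · rw [h, zero_smul]; exact HomD.zero _ _
          · rw [h, ← hk, card_U_insert]
            exact (hq2 t).smul (cf_isHomogeneous e g _))
      refine ⟨c, ⟨fun v => ?_, hc2⟩, hc1⟩
      rw [← LinearMap.mem_range, F.exact_succ, LinearMap.mem_ker, hc1, LinearMap.comp_apply, d_d,
        map_zero])
  -- the chain map from `F` to the Taylor complex
  obtain ⟨q, hqz, hqQ, hqR⟩ := exists_seq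
    (X := fun i => (Fin (F.rk i) → MvPolynomial (Fin n) K) →ₗ[MvPolynomial (Fin n) K]
      T K n m i)
    (fun i q => (∀ v, ∃ x, d K e i x = q (F.δ i v)))
    (fun i q q' => ∀ v, d K e i (q' v) = q (F.δ i v)) (LinearMap.pi fun _ => F.aug)
    (by
      intro v
      rw [d_exact0]
      have : F.δ 0 v ∈ LinearMap.range (F.δ 0) := ⟨v, rfl⟩
      rwa [F.exact_zero, Submodule.mem_comap] at this)
    (by
      intro i q hq
      obtain ⟨c, hc1, -⟩ := exists_lift (q ∘ₗ F.δ i) (d K e i) (fun _ _ => True)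
        (fun k => by
          obtain ⟨x, hx⟩ := hq (Pi.single k 1)
          exact ⟨x, hx, trivial⟩)
      refine ⟨c, fun v => ?_, hc1⟩
      apply d_exact
      rw [hc1, LinearMap.comp_apply]
      have : F.δ (i + 1) v ∈ LinearMap.range (F.δ (i + 1)) := ⟨v, rfl⟩
      rw [F.exact_succ, LinearMap.mem_ker] at this
      rw [this, map_zero])
  -- the difference with the identity
  have hG : ∀ i v, d K e i (q (i + 1) (p (i + 1) v) - v) =
      q i (p i (d K e i v)) - d K e i v := by
    intro i v
    rw [map_sub, hqR, hpR]
  -- the homotopy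
  obtain ⟨h0, hh0, -⟩ := exists_lift (q 0 ∘ₗ p 0 - LinearMap.id) (d K e 0) (fun _ _ => True)
    (fun k => by
      have : ∃ w, d K e 0 w = q 0 (p 0 (Pi.single k 1)) - Pi.single k 1 := by
        rw [d_exact0]
        have := hp0aug (Pi.single k 1)
        rw [← Ideal.neg_mem_iff, neg_sub] at this
        rw [hqz, hpz]
        simpa using this
      obtain ⟨w, hw⟩ := this
      exact ⟨w, hw, trivial⟩)
  simp only [LinearMap.sub_apply, LinearMap.comp_apply, LinearMap.id_apply] at hh0
  obtain ⟨h, hhz, hhQ, hhR⟩ := exists_seq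
    (X := fun i => T K n m i →ₗ[MvPolynomial (Fin n) K] T K n m (i + 1))
    (fun i h => ∀ v, d K e i ((q (i + 1) (p (i + 1) v) - v) - h (d K e i v)) = 0)
    (fun i h h' => ∀ v, d K e (i + 1) (h' v) = (q (i + 1) (p (i + 1) v) - v) - h (d K e i v))
    h0
    (by
      intro v
      rw [map_sub, hG, hh0, sub_self])
    (by
      intro i h hh
      obtain ⟨c, hc1, -⟩ := exists_lift
        ((q (i + 1) ∘ₗ p (i + 1) - LinearMap.id) - h ∘ₗ d K e i) (d K e (i + 1))
        (fun _ _ => True) (fun k => by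
          obtain ⟨w, hw⟩ := d_exact e i _ (hh (Pi.single k 1))
          exact ⟨w, hw, trivial⟩)
      simp only [LinearMap.sub_apply, LinearMap.comp_apply, LinearMap.id_apply] at hc1
      refine ⟨c, fun v => ?_, hc1⟩
      rw [map_sub, hG, hc1, d_d, map_zero, sub_zero, sub_self])
  -- evaluate at `S`
  have key := congrArg constantCoeff (congrFun (hhR r (Pi.single S 1)) S)
  have k1 : constantCoeff (d K e (r + 1) (h (r + 1) (Pi.single S 1)) S) = 0 := by
    rw [d_apply, map_sum]
    refine Finset.sum_eq_zero fun g hg => ?_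
    rw [map_mul, cf, map_mul, constantCoeff_edgeMonomial, mul_zero, zero_mul]
    exact Finset.sdiff_nonempty.mpr (hind g (Finset.mem_compl.mp hg))
  have k2 : constantCoeff (h r (d K e r (Pi.single S 1)) S) = 0 := by
    apply constantCoeff_map
    intro t
    rcases d_single (K := K) e r S t with h | ⟨g, hg, hk, h⟩
    · rw [h, map_zero]
    · have hgS : g ∈ S.1 := hk ▸ Finset.mem_insert_self g t.1
      rw [h, cf, map_mul, constantCoeff_edgeMonomial, mul_zero]
      rw [Finset.sdiff_eq_self_of_disjoint]
      · exact hne g hgS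
      · rw [U, Finset.disjoint_biUnion_right]
        intro b hb
        refine hdisj g hgS b (hk ▸ Finset.mem_insert_of_mem hb) ?_
        rintro rfl
        exact hg hb
  have k3 : constantCoeff (q (r + 1) (p (r + 1) (Pi.single S 1)) S) = 0 := by
    apply constantCoeff_map
    intro j
    by_contra hc
    have := (hpQ (r + 1)).2 S j 0 (mem_support_iff.mpr hc)
    have h2 := hlt j
    simp only [map_zero, zero_add] at this
    omega
  rw [k1] at key
  simp only [Pi.sub_apply, map_sub, k2, k3, Pi.single_eq_same, map_one] at key
  simp at key

lemma main_bound (C : Clutter n) (r : ℕ) (f : Fin r → Finset (Fin n))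
    (hf : C.IsInducedMatching f) : (∑ i, (f i).card) ≤ regR (C.edgeIdeal K) + r := by
  classical
  obtain ⟨h1, h2, h3⟩ := hf
  by_cases hemp : ∃ i, f i = ∅
  · obtain ⟨i, hi⟩ := hemp
    have hz : ∀ j, f j = ∅ := by
      intro j
      have := C.antichain (f i) (h1 i) (f j) (h1 j) (by rw [hi]; exact Finset.empty_subset _)
      rw [← this, hi]
    simp [hz]
  push Not at hemp
  rcases r with _ | r
  · simp
  let e : Fin C.edges.card → Finset (Fin n) := fun k => (C.edges.equivFin.symm k).1
  have hrange : Set.range e = (C.edges : Set (Finset (Fin n))) := by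
    ext s
    constructor
    · rintro ⟨k, rfl⟩
      exact (C.edges.equivFin.symm k).2
    · intro hs
      exact ⟨C.edges.equivFin ⟨s, hs⟩, by simp [e]⟩
  have hinj : Function.Injective e :=
    Subtype.val_injective.comp C.edges.equivFin.symm.injective
  have hI : C.edgeIdeal K = Ideal.span (edgeMonomial K '' Set.range e) := by
    rw [hrange]; rfl
  rw [hI]
  have hset : {ρ : ℕ | ∃ F : GFR n K (Ideal.span (edgeMonomial K '' Set.range e)),
      ∀ (i : ℕ) (j : Fin (F.rk i)), F.tw i j ≤ ρ + i}.Nonempty :=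
    ⟨n, taylorGFR e, taylorGFR_tw e⟩
  obtain ⟨F, hF⟩ := Nat.sInf_mem hset
  change ∀ (i : ℕ) (j : Fin (F.rk i)),
    F.tw i j ≤ regR (Ideal.span (edgeMonomial K '' Set.range e)) + i at hF
  by_contra hcon
  push Not at hcon
  have hfinj : Function.Injective f := by
    intro i j hij
    by_contra hne
    have := h2 i j hne
    rw [hij, disjoint_self] at this
    exact (hemp j).ne_empty this
  have hex : ∀ i, ∃ k, e k = f i := by
    intro i
    have : f i ∈ Set.range e := by rw [hrange]; exact h1 i
    exact this
  choose k hk using hex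
  have hkinj : Function.Injective k := by
    intro i j hij
    apply hfinj
    rw [← hk, ← hk, hij]
  have hU : U e (Finset.univ.image k) = Finset.univ.biUnion f := by
    rw [U, Finset.image_biUnion]
    simp only [hk]
  have hcard : (U e (Finset.univ.image k)).card = ∑ i, (f i).card := by
    rw [hU, Finset.card_biUnion]
    intro i _ j _ hij
    exact h2 i j hij
  refine lower_bound e F r ⟨Finset.univ.image k, by
    rw [Finset.card_image_of_injective _ hkinj]; simp⟩ ?_ ?_ ?_ ?_
  · intro g hg
    obtain ⟨i, -, rfl⟩ := Finset.mem_image.mp hg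
    rw [hk]
    exact hemp i
  · intro g hg g' hg' hne
    obtain ⟨i, -, rfl⟩ := Finset.mem_image.mp hg
    obtain ⟨j, -, rfl⟩ := Finset.mem_image.mp hg'
    rw [hk, hk]
    exact h2 i j fun hij => hne (by rw [hij])
  · intro g hg hsub
    dsimp only at hg hsub
    rw [hU] at hsub
    obtain ⟨i, hi⟩ := h3 (e g) (C.edges.equivFin.symm g).2 hsub
    refine hg (Finset.mem_image.mpr ⟨i, Finset.mem_univ _, hinj ?_⟩)
    rw [hk, hi]
  · intro j
    have := hF (r + 1) j
    dsimp only
    rw [hcard]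
    omega

end TaylorRes

/-- If `f₁,…,f_r` is an induced matching of a clutter `C` with
`dᵢ = |fᵢ|`, then `(∑ dᵢ) - r ≤ reg(R/I(C))` (stated as `∑ dᵢ ≤ reg(R/I(C)) + r`).
In particular, for a graph `G` (a clutter all of whose edges have two vertices),
`im(G) ≤ reg(R/I(G))`. -/
theorem stmt_4 (K : Type) [Field K] {n : ℕ} :
    (∀ (C : Clutter n) (r : ℕ) (f : Fin r → Finset (Fin n)),
      C.IsInducedMatching f → (∑ i, (f i).card) ≤ regR (C.edgeIdeal K) + r) ∧
    (∀ C : Clutter n, (∀ e ∈ C.edges, e.card = 2) →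
      imClutter C ≤ regR (C.edgeIdeal K)) := by
  refine ⟨fun C r f hf => TaylorRes.main_bound C r f hf, fun C hC => ?_⟩
  unfold imClutter
  refine csSup_le ⟨0, Fin.elim0, fun i => i.elim0, fun i => i.elim0, ?_⟩ ?_
  · intro e he hsub
    exfalso
    have h0 : e = ∅ := by simpa using hsub
    have := hC e he
    rw [h0] at this
    simp at this
  · rintro r ⟨f, hf⟩
    have h := TaylorRes.main_bound (K := K) C r f hf
    rw [Finset.sum_congr rfl (fun i _ => hC (f i) (hf.1 i))] at h
    simp at h
    omega
end

section
/- For any finite simple graph G with edge ideal I(G) ⊂ R = K[V(G)], reg(R/I(G)) ≤ β'(G), where β'(G) is the cardinality of a smallest maximal matching of G. -/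
open MvPolynomial

/-- The edge ideal of a (simple) graph, in `K[x_v : v ∈ V]`. -/
noncomputable def graphIdeal (K : Type) [Field K] {V : Type} (G : SimpleGraph V) :
    Ideal (MvPolynomial V K) :=
  Ideal.span { m : MvPolynomial V K | ∃ u v : V, G.Adj u v ∧ m = X u * X v }

/-- A matching of a graph: a finite set of pairwise disjoint edges. -/
def SimpleGraph.IsMatchingSet {V : Type} (G : SimpleGraph V) (M : Finset (Sym2 V)) : Prop :=
  (∀ e ∈ M, e ∈ G.edgeSet) ∧
  (∀ e ∈ M, ∀ f ∈ M, e ≠ f → ∀ v : V, ¬(v ∈ e ∧ v ∈ f))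

/-- A maximal matching of a graph (maximal with respect to inclusion). -/
def SimpleGraph.IsMaximalMatchingSet {V : Type} [DecidableEq V] (G : SimpleGraph V)
    (M : Finset (Sym2 V)) : Prop :=
  G.IsMatchingSet M ∧ ∀ e ∈ G.edgeSet, e ∉ M → ¬G.IsMatchingSet (insert e M)

/-- `β'(G)`: the minimum size of a maximal matching of `G`. -/
noncomputable def betaPrime {V : Type} [DecidableEq V] (G : SimpleGraph V) : ℕ :=
  sInf { k : ℕ | ∃ M : Finset (Sym2 V), G.IsMaximalMatchingSet M ∧ M.card = k }

section Helpers

variable {n : ℕ} {K : Type} [Field K]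

/-- Homogeneity of a vector in a twisted free module (`none` means no condition). -/
def HomD (m : ℕ) (t : Fin m → ℕ) : Option ℕ → (Fin m → MvPolynomial (Fin n) K) → Prop
  | none, _ => True
  | some d, f => ∀ j, f j = 0 ∨ (t j ≤ d ∧ (f j).IsHomogeneous (d - t j))

/-- A family of graded pieces of a module, `none` being the whole module. -/
structure Gr (n : ℕ) (K : Type) [Field K] (M : Type) [AddCommGroup M]
    [Module (MvPolynomial (Fin n) K) M] : Type where
  g : Option ℕ → AddSubgroup M
  g_none : ∀ y, y ∈ g none
  g_smul : ∀ (a : MvPolynomial (Fin n) K) (d e : ℕ) (y : M), a.IsHomogeneous e → y ∈ g (some d) →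
    a • y ∈ g (some (d + e))

/-- Grading on the twisted free module. -/
noncomputable def freeGr (m : ℕ) (t : Fin m → ℕ) : Gr n K (Fin m → MvPolynomial (Fin n) K) where
  g d :=
    { carrier := {f | HomD m t d f}
      zero_mem' := by
        cases d with
        | none => trivial
        | some d => intro j; left; rfl
      add_mem' := by
        intro a b ha hb
        cases d with
        | none => trivial
        | some d =>
          intro j
          rcases ha j with h1 | ⟨h1, h1'⟩ <;> rcases hb j with h2 | ⟨h2, h2'⟩
          · left; simp [h1, h2]
          · right; simpa [h1, h2] using h2'
          · right; simpa [h1, h2] using h1'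
          · right; exact ⟨h1, h1'.add h2'⟩
      neg_mem' := by
        intro a ha
        cases d with
        | none => trivial
        | some d =>
          intro j
          rcases ha j with h1 | ⟨h1, h1'⟩
          · left; simp [h1]
          · right; exact ⟨h1, h1'.neg⟩ }
  g_none y := trivial
  g_smul a d e y ha hy := by
    intro j
    rcases hy j with h1 | ⟨h1, h1'⟩
    · left; simp [h1]
    · right
      refine ⟨by omega, ?_⟩
      have := ha.mul h1'
      rw [show d + e - t j = e + (d - t j) by omega]
      exact this

theorem mem_freeGr (m : ℕ) (t : Fin m → ℕ) (d : Option ℕ) (f : Fin m → MvPolynomial (Fin n) K) :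
    f ∈ (freeGr m t).g d ↔ HomD m t d f := Iff.rfl

/-- Induced grading on a submodule. -/
noncomputable def Gr.sub {M : Type} [AddCommGroup M] [Module (MvPolynomial (Fin n) K) M] (G : Gr n K M)
    (N : Submodule (MvPolynomial (Fin n) K) M) : Gr n K N where
  g d := (G.g d).comap N.subtype.toAddMonoidHom
  g_none y := G.g_none y.1
  g_smul a d e y ha hy := G.g_smul a d e y.1 ha hy

theorem Gr.mem_sub {M : Type} [AddCommGroup M] [Module (MvPolynomial (Fin n) K) M] (G : Gr n K M)
    (N : Submodule (MvPolynomial (Fin n) K) M) (d : Option ℕ) (y : N) :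
    y ∈ (G.sub N).g d ↔ y.1 ∈ G.g d := Iff.rfl

/-- Shift of a grading by `-1`. -/
noncomputable def Gr.shift {M : Type} [AddCommGroup M] [Module (MvPolynomial (Fin n) K) M] (G : Gr n K M) :
    Gr n K M where
  g d := match d with
    | none => ⊤
    | some 0 => ⊥
    | some (d + 1) => G.g (some d)
  g_none y := trivial
  g_smul a d e y ha hy := by
    cases d with
    | zero =>
      have : y = 0 := hy
      rw [this, smul_zero]
      exact zero_mem _
    | succ d =>
      have := G.g_smul a d e y ha hy
      rw [show d + 1 + e = (d + e) + 1 by omega]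
      exact this

theorem graded_of_basis {M : Type} [AddCommGroup M] [Module (MvPolynomial (Fin n) K) M]
    (G : Gr n K M) (m : ℕ) (t : Fin m → ℕ)
    (v : Fin m → M) (hv : ∀ j, v j ∈ G.g (some (t j)))
    (d : Option ℕ) (f : Fin m → MvPolynomial (Fin n) K) (hf : HomD m t d f) :
    Fintype.linearCombination (MvPolynomial (Fin n) K) v f ∈ G.g d := by
  cases d with
  | none => exact G.g_none _
  | some d =>
    rw [Fintype.linearCombination_apply]
    refine sum_mem fun j _ => ?_
    rcases hf j with h | ⟨h, h'⟩
    · rw [h, zero_smul]; exact zero_mem _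
    · have := G.g_smul _ _ _ _ h' (hv j)
      rwa [show t j + (d - t j) = d by omega] at this

/-- `Res l r M G`: `M` has a graded free resolution with `l` terms and twists at most `r + i`. -/
def Res : (l r : ℕ) → (M : Type) → [AddCommGroup M] → [Module (MvPolynomial (Fin n) K) M] →
    Gr n K M → Prop
  | 0, _, M, _, _, _ => Subsingleton M
  | l + 1, r, M, _, _, G => ∃ (m : ℕ) (t : Fin m → ℕ)
      (φ : (Fin m → MvPolynomial (Fin n) K) →ₗ[MvPolynomial (Fin n) K] M),
      (∀ j, t j ≤ r) ∧ (∀ d f, HomD m t d f → φ f ∈ G.g d) ∧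
      (∀ d, ∀ y ∈ G.g d, ∃ f, HomD m t d f ∧ φ f = y) ∧
      Res l (r + 1) (LinearMap.ker φ) ((freeGr m t).sub (LinearMap.ker φ))

theorem Res.mono_r {l : ℕ} : ∀ {r r' : ℕ} (_ : r ≤ r') {M : Type} [AddCommGroup M]
    [Module (MvPolynomial (Fin n) K) M] {G : Gr n K M}, Res l r M G → Res l r' M G := by
  induction l with
  | zero => intro r r' h M _ _ G hR; exact hR
  | succ l ih =>
    intro r r' h M _ _ G hR
    obtain ⟨m, t, φ, h1, h2, h3, h4⟩ := hR
    exact ⟨m, t, φ, fun j => (h1 j).trans h, h2, h3, ih (by omega) h4⟩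

theorem Res.succ_l {l : ℕ} : ∀ {r : ℕ} {M : Type} [AddCommGroup M]
    [Module (MvPolynomial (Fin n) K) M] {G : Gr n K M}, Res l r M G → Res (l + 1) r M G := by
  induction l with
  | zero =>
    intro r M _ _ G hR
    have hR' : Subsingleton M := hR
    refine ⟨0, Fin.elim0, 0, fun j => j.elim0, ?_, ?_, ?_⟩
    · intro d f _; exact zero_mem _
    · intro d y _
      refine ⟨0, ?_, Subsingleton.elim _ _⟩
      cases d with
      | none => trivial
      | some d => intro j; exact j.elim0
    · change Subsingleton _
      infer_instance
  | succ l ih =>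
    intro r M _ _ G hR
    obtain ⟨m, t, φ, h1, h2, h3, h4⟩ := hR
    exact ⟨m, t, φ, h1, h2, h3, ih h4⟩

theorem Res.mono_l {l l' r : ℕ} (h : l ≤ l') {M : Type} [AddCommGroup M]
    [Module (MvPolynomial (Fin n) K) M] {G : Gr n K M} (hR : Res l r M G) : Res l' r M G := by
  induction h with
  | refl => exact hR
  | step _ ih => exact ih.succ_l

theorem Gr.ext_g {M : Type} [AddCommGroup M] [Module (MvPolynomial (Fin n) K) M]
    {G H : Gr n K M} (h : ∀ d y, y ∈ G.g d ↔ y ∈ H.g d) : G = H := by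
  cases G; cases H
  congr
  funext d
  ext y
  exact h d y

theorem homD_shift (m : ℕ) (t : Fin m → ℕ) (d : Option ℕ) (f : Fin m → MvPolynomial (Fin n) K) :
    HomD m (fun j => t j + 1) d f ↔ f ∈ ((freeGr m t).shift).g d := by
  cases d with
  | none => exact ⟨fun _ => trivial, fun _ => trivial⟩
  | some d =>
    cases d with
    | zero =>
      constructor
      · intro h
        change f = 0
        funext j
        rcases h j with h | h
        · exact h
        · exact absurd h.1 (by simp)
      · intro h j
        have : f = 0 := h
        left; simp [this]
    | succ d =>
      change (∀ j, _) ↔ (∀ j, _)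
      simp

theorem Res.shift {l : ℕ} : ∀ {r : ℕ} {M : Type} [AddCommGroup M]
    [Module (MvPolynomial (Fin n) K) M] {G : Gr n K M}, Res l r M G → Res l (r + 1) M G.shift := by
  induction l with
  | zero => intro r M _ _ G hR; exact hR
  | succ l ih =>
    intro r M _ _ G hR
    obtain ⟨m, t, φ, h1, h2, h3, h4⟩ := hR
    refine ⟨m, fun j => t j + 1, φ, fun j => by simpa using h1 j, ?_, ?_, ?_⟩
    · intro d f hf
      rw [homD_shift] at hf
      match d, hf with
      | none, _ => trivial
      | some 0, hf =>
        have : f = 0 := hf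
        rw [this, map_zero]; exact zero_mem _
      | some (d + 1), hf => exact h2 (some d) f hf
    · intro d y hy
      simp only [homD_shift]
      match d, hy with
      | none, _ =>
        obtain ⟨f, _, hf⟩ := h3 none y (G.g_none y)
        exact ⟨f, trivial, hf⟩
      | some 0, hy =>
        have : y = 0 := hy
        exact ⟨0, zero_mem _, by rw [this, map_zero]⟩
      | some (d + 1), hy => exact h3 (some d) y hy
    · have := ih h4
      convert this using 1
      apply Gr.ext_g
      intro d y
      rw [Gr.mem_sub, mem_freeGr, homD_shift]
      match d with
      | none => exact ⟨fun _ => trivial, fun _ => trivial⟩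
      | some 0 =>
        change y.1 = 0 ↔ y = 0
        simp
      | some (d + 1) => exact Iff.rfl

/-- Degreewise short exact sequences. -/
structure SES {A B C : Type} [AddCommGroup A] [AddCommGroup B] [AddCommGroup C]
    [Module (MvPolynomial (Fin n) K) A] [Module (MvPolynomial (Fin n) K) B]
    [Module (MvPolynomial (Fin n) K) C] (GA : Gr n K A) (GB : Gr n K B) (GC : Gr n K C)
    (i : A →ₗ[MvPolynomial (Fin n) K] B) (p : B →ₗ[MvPolynomial (Fin n) K] C) : Prop where
  inj : Function.Injective i
  i_mem : ∀ d, ∀ a ∈ GA.g d, i a ∈ GB.g d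
  p_mem : ∀ d, ∀ b ∈ GB.g d, p b ∈ GC.g d
  comp : ∀ a, p (i a) = 0
  exact : ∀ d, ∀ b ∈ GB.g d, p b = 0 → ∃ a ∈ GA.g d, i a = b
  surj : ∀ d, ∀ c ∈ GC.g d, ∃ b ∈ GB.g d, p b = c

/-- inclusion of the left block -/
noncomputable def inL (m m' : ℕ) : (Fin m → MvPolynomial (Fin n) K) →ₗ[MvPolynomial (Fin n) K]
    (Fin (m + m') → MvPolynomial (Fin n) K) where
  toFun f := Fin.append f 0
  map_add' f g := by
    funext j
    refine Fin.addCases (fun j => ?_) (fun j => ?_) j <;> simp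
  map_smul' a f := by
    funext j
    refine Fin.addCases (fun j => ?_) (fun j => ?_) j <;> simp

theorem homD_append (m m' : ℕ) (t : Fin m → ℕ) (t' : Fin m' → ℕ) (d : Option ℕ)
    (f : Fin (m + m') → MvPolynomial (Fin n) K) :
    HomD (m + m') (Fin.append t t') d f ↔
      HomD m t d (fun j => f (Fin.castAdd m' j)) ∧ HomD m' t' d (fun j => f (Fin.natAdd m j)) := by
  cases d with
  | none => exact ⟨fun _ => ⟨trivial, trivial⟩, fun _ => trivial⟩
  | some d =>
    constructor
    · intro h
      refine ⟨fun j => ?_, fun j => ?_⟩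
      · simpa using h (Fin.castAdd m' j)
      · simpa using h (Fin.natAdd m j)
    · rintro ⟨h1, h2⟩ j
      refine Fin.addCases (fun j => ?_) (fun j => ?_) j
      · simpa using h1 j
      · simpa using h2 j

theorem homD_single (m : ℕ) (t : Fin m → ℕ) (j : Fin m) :
    HomD m t (some (t j)) (Pi.single j (1 : MvPolynomial (Fin n) K)) := by
  intro k
  by_cases h : k = j
  · subst h
    right
    simp [MvPolynomial.isHomogeneous_one]
  · left
    simp [h]

theorem homD_zero (m : ℕ) (t : Fin m → ℕ) (d : Option ℕ) :
    HomD m t d (0 : Fin m → MvPolynomial (Fin n) K) := zero_mem ((freeGr m t).g d)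

theorem horseshoe {l : ℕ} : ∀ {r : ℕ} {A B C : Type} [AddCommGroup A] [AddCommGroup B]
    [AddCommGroup C]
    [Module (MvPolynomial (Fin n) K) A] [Module (MvPolynomial (Fin n) K) B]
    [Module (MvPolynomial (Fin n) K) C] {GA : Gr n K A} {GB : Gr n K B} {GC : Gr n K C}
    {i : A →ₗ[MvPolynomial (Fin n) K] B} {p : B →ₗ[MvPolynomial (Fin n) K] C}
    (_ : SES GA GB GC i p), Res l r A GA → Res l r C GC → Res l r B GB := by
  induction l with
  | zero =>
    intro r A B C _ _ _ _ _ _ GA GB GC i p hS hA hC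
    have hA' : Subsingleton A := hA
    have hC' : Subsingleton C := hC
    change Subsingleton B
    refine subsingleton_of_forall_eq 0 fun b => ?_
    obtain ⟨a, _, rfl⟩ := hS.exact none b (GB.g_none b) (Subsingleton.elim _ _)
    rw [Subsingleton.elim a 0, map_zero]
  | succ l ih =>
    intro r A B C _ _ _ _ _ _ GA GB GC i p hS hA hC
    obtain ⟨m, t, φ, h1, h2, h3, h4⟩ := hA
    obtain ⟨m', t', φ', h1', h2', h3', h4'⟩ := hC
    have hv : ∀ j : Fin m', ∃ b ∈ GB.g (some (t' j)), p b = φ' (Pi.single j 1) := fun j =>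
      hS.surj _ _ (h2' _ _ (homD_single m' t' j))
    choose v hv hpv using hv
    set ψ := Fintype.linearCombination (MvPolynomial (Fin n) K) v with hψ
    have hψg : ∀ d f, HomD m' t' d f → ψ f ∈ GB.g d := fun d f hf =>
      graded_of_basis GB m' t' v hv d f hf
    have hpψ : ∀ f, p (ψ f) = φ' f := by
      intro f
      have : p.comp ψ = φ' := by
        refine LinearMap.pi_ext' fun j => ?_
        ext
        simp [hψ, Fintype.linearCombination_apply_single, hpv]
      exact LinearMap.congr_fun this f
    let qL : (Fin (m + m') → MvPolynomial (Fin n) K) →ₗ[MvPolynomial (Fin n) K]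
      (Fin m → MvPolynomial (Fin n) K) := LinearMap.funLeft _ _ (Fin.castAdd m')
    let qR : (Fin (m + m') → MvPolynomial (Fin n) K) →ₗ[MvPolynomial (Fin n) K]
      (Fin m' → MvPolynomial (Fin n) K) := LinearMap.funLeft _ _ (Fin.natAdd m)
    let Φ := (i.comp φ).comp qL + ψ.comp qR
    have hΦ : ∀ f, Φ f = i (φ (qL f)) + ψ (qR f) := fun f => rfl
    have hLa : ∀ f f', qL (Fin.append f f') = f := by
      intro f f'; funext j; simp [qL, LinearMap.funLeft_apply]
    have hRa : ∀ f f', qR (Fin.append f f') = f' := by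
      intro f f'; funext j; simp [qR, LinearMap.funLeft_apply]
    have happ : ∀ f, Fin.append (qL f) (qR f) = f := by
      intro f; funext j
      refine Fin.addCases (fun j => ?_) (fun j => ?_) j <;> simp [qL, qR, LinearMap.funLeft_apply]
    have hH : ∀ d f, HomD (m + m') (Fin.append t t') d f ↔ HomD m t d (qL f) ∧ HomD m' t' d (qR f) :=
      fun d f => homD_append m m' t t' d f
    have hpi : ∀ f, p (Φ f) = φ' (qR f) := by
      intro f; rw [hΦ, map_add, hS.comp, zero_add, hpψ]
    refine ⟨m + m', Fin.append t t', Φ, ?_, ?_, ?_, ?_⟩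
    · intro j
      refine Fin.addCases (fun j => ?_) (fun j => ?_) j
      · simpa using h1 j
      · simpa using h1' j
    · intro d f hf
      rw [hH] at hf
      exact add_mem (hS.i_mem _ _ (h2 _ _ hf.1)) (hψg _ _ hf.2)
    · intro d y hy
      obtain ⟨f', hf', hfy⟩ := h3' d (p y) (hS.p_mem d y hy)
      obtain ⟨a, ha, hay⟩ := hS.exact d (y - ψ f') (sub_mem hy (hψg _ _ hf'))
        (by rw [map_sub, hpψ, hfy, sub_self])
      obtain ⟨f, hf, rfl⟩ := h3 d a ha
      refine ⟨Fin.append f f', ?_, ?_⟩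
      · rw [hH, hLa, hRa]; exact ⟨hf, hf'⟩
      · rw [hΦ, hLa, hRa, hay]; abel
    · have hin : ∀ f : Fin m → MvPolynomial (Fin n) K, inL m m' f = Fin.append f 0 := fun f => rfl
      have k1 : ∀ f ∈ LinearMap.ker φ, inL m m' f ∈ LinearMap.ker Φ := by
        intro f hf
        rw [LinearMap.mem_ker] at hf ⊢
        rw [hΦ, hin, hLa, hRa, hf]; simp
      have k2 : ∀ f ∈ LinearMap.ker Φ, qR f ∈ LinearMap.ker φ' := by
        intro f hf
        rw [LinearMap.mem_ker] at hf ⊢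
        rw [← hpi, hf, map_zero]
      refine ih (i := (inL m m').restrict k1) (p := qR.restrict k2) ?_ h4 h4'
      refine ⟨?_, ?_, ?_, ?_, ?_, ?_⟩
      · intro a b hab
        have := congrArg (fun z => qL z.1) hab
        simp only [LinearMap.coe_restrict_apply, hin, hLa] at this
        exact Subtype.ext this
      · intro d a ha
        rw [Gr.mem_sub, mem_freeGr] at ha ⊢
        rw [LinearMap.coe_restrict_apply, hH, hin, hLa, hRa]
        exact ⟨ha, homD_zero _ _ _⟩
      · intro d b hb
        rw [Gr.mem_sub, mem_freeGr] at hb ⊢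
        rw [hH] at hb
        exact hb.2
      · intro a
        apply Subtype.ext
        rw [LinearMap.coe_restrict_apply, LinearMap.coe_restrict_apply, hin, hRa]; rfl
      · intro d b hb hb0
        rw [Gr.mem_sub, mem_freeGr, hH] at hb
        have hb0' : qR b.1 = 0 := congrArg Subtype.val hb0
        have hk : Φ b.1 = 0 := b.2
        refine ⟨⟨qL b.1, ?_⟩, hb.1, ?_⟩
        · rw [LinearMap.mem_ker]
          apply hS.inj
          rw [hΦ, hb0', map_zero, add_zero] at hk
          rw [hk, map_zero]
        · apply Subtype.ext
          have := happ b.1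
          rw [hb0'] at this
          exact this
      · intro d c hc
        rw [Gr.mem_sub, mem_freeGr] at hc
        have hk : φ' c.1 = 0 := c.2
        obtain ⟨a, ha, hay⟩ := hS.exact d (ψ c.1) (hψg _ _ hc) (by rw [hpψ, hk])
        obtain ⟨f, hf, rfl⟩ := h3 d a ha
        refine ⟨⟨Fin.append (-f) c.1, ?_⟩, ?_, ?_⟩
        · rw [LinearMap.mem_ker, hΦ, hLa, hRa, map_neg, map_neg, hay]; simp
        · have : HomD (m + m') (Fin.append t t') d (Fin.append (-f) c.1) := by
            rw [hH, hLa, hRa]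
            exact ⟨((freeGr m t).g d).neg_mem hf, hc⟩
          exact this
        · apply Subtype.ext
          rw [LinearMap.coe_restrict_apply, hRa]

theorem cone {l r : ℕ} {A B C : Type} [AddCommGroup A] [AddCommGroup B]
    [AddCommGroup C]
    [Module (MvPolynomial (Fin n) K) A] [Module (MvPolynomial (Fin n) K) B]
    [Module (MvPolynomial (Fin n) K) C] {GA : Gr n K A} {GB : Gr n K B} {GC : Gr n K C}
    {i : A →ₗ[MvPolynomial (Fin n) K] B} {p : B →ₗ[MvPolynomial (Fin n) K] C}
    (hS : SES GA GB GC i p) (hA : Res l (r + 1) A GA) (hB : Res (l + 1) r B GB) :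
    Res (l + 1) r C GC := by
  obtain ⟨m, t, φ, h1, h2, h3, h4⟩ := hB
  refine ⟨m, t, p.comp φ, h1, ?_, ?_, ?_⟩
  · intro d f hf; exact hS.p_mem _ _ (h2 _ _ hf)
  · intro d y hy
    obtain ⟨b, hb, rfl⟩ := hS.surj d y hy
    obtain ⟨f, hf, rfl⟩ := h3 d b hb
    exact ⟨f, hf, rfl⟩
  · have hex : ∀ z : LinearMap.ker (p.comp φ), ∃ a, i a = φ z.1 := by
      intro z
      obtain ⟨a, _, ha⟩ := hS.exact none (φ z.1) (GB.g_none _) z.2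
      exact ⟨a, ha⟩
    choose q hq using hex
    let Q : LinearMap.ker (p.comp φ) →ₗ[MvPolynomial (Fin n) K] A :=
      { toFun := q
        map_add' := fun x y => hS.inj (by rw [map_add, hq, hq, hq]; simp)
        map_smul' := fun a y => hS.inj (by rw [map_smul, hq, hq]; simp) }
    have hQ : ∀ z, i (Q z) = φ z.1 := hq
    have hle : LinearMap.ker φ ≤ LinearMap.ker (p.comp φ) := by
      intro z hz
      rw [LinearMap.mem_ker] at hz ⊢
      simp [hz]
    refine horseshoe (i := Submodule.inclusion hle) (p := Q) ?_ h4 hA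
    refine ⟨Submodule.inclusion_injective hle, ?_, ?_, ?_, ?_, ?_⟩
    · intro d a ha; exact ha
    · intro d b hb
      obtain ⟨a, ha, hab⟩ := hS.exact d (φ b.1) (h2 _ _ hb) b.2
      rw [← hQ] at hab
      rw [← hS.inj hab]; exact ha
    · intro a
      apply hS.inj
      rw [hQ, map_zero]
      exact a.2
    · intro d b hb hb0
      refine ⟨⟨b.1, ?_⟩, hb, rfl⟩
      rw [LinearMap.mem_ker, ← hQ, hb0, map_zero]
    · intro d c hc
      obtain ⟨f, hf, hfc⟩ := h3 d (i c) (hS.i_mem _ _ hc)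
      refine ⟨⟨f, ?_⟩, hf, ?_⟩
      · rw [LinearMap.mem_ker, LinearMap.comp_apply, hfc, hS.comp]
      · apply hS.inj
        rw [hQ, hfc]

/-- Standard grading on the cyclic module `R / J`. -/
noncomputable def quotGr (J : Ideal (MvPolynomial (Fin n) K)) :
    Gr n K (MvPolynomial (Fin n) K ⧸ J) where
  g d := match d with
    | none => ⊤
    | some d => ((homogeneousSubmodule (Fin n) K d).toAddSubgroup).map
        (Submodule.mkQ J).toAddMonoidHom
  g_none y := trivial
  g_smul a d e y ha hy := by
    obtain ⟨f, hf, rfl⟩ := hy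
    refine ⟨a * f, ?_, ?_⟩
    · have hf' : f.IsHomogeneous d := hf
      change (a * f).IsHomogeneous (d + e)
      rw [add_comm]
      exact ha.mul hf'
    · change Submodule.mkQ J (a * f) = a • Submodule.mkQ J f
      rw [← smul_eq_mul, map_smul]

theorem mem_quotGr (J : Ideal (MvPolynomial (Fin n) K)) (d : ℕ) (y : MvPolynomial (Fin n) K ⧸ J) :
    y ∈ (quotGr J).g (some d) ↔ ∃ f : MvPolynomial (Fin n) K, f.IsHomogeneous d ∧
      Submodule.mkQ J f = y := Iff.rfl

/-- Monomials lying in the ideal generated by the edges of `G` and the variables outside `S`. -/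
def PS (G : SimpleGraph (Fin n)) (S : Set (Fin n)) (m : Fin n →₀ ℕ) : Prop :=
  (∃ v, v ∉ S ∧ m v ≠ 0) ∨ ∃ u v, G.Adj u v ∧ m u ≠ 0 ∧ m v ≠ 0

theorem PS_upper (G : SimpleGraph (Fin n)) (S : Set (Fin n)) : IsUpperSet {m | PS G S m} := by
  intro a b hab ha
  have hne : ∀ v, a v ≠ 0 → b v ≠ 0 := by
    intro v hv
    have := hab v
    omega
  rcases ha with ⟨v, h1, h2⟩ | ⟨u, v, h1, h2, h3⟩
  · exact Or.inl ⟨v, h1, hne v h2⟩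
  · exact Or.inr ⟨u, v, h1, hne u h2, hne v h3⟩

variable (K) in
/-- The ideal generated by the edges of `G` and the variables outside `S`. -/
noncomputable def JI (G : SimpleGraph (Fin n)) (S : Set (Fin n)) : Ideal (MvPolynomial (Fin n) K) :=
  restrictSupportIdeal K {m | PS G S m} (PS_upper G S)

theorem mem_JI (G : SimpleGraph (Fin n)) (S : Set (Fin n)) (f : MvPolynomial (Fin n) K) :
    f ∈ JI K G S ↔ ∀ m, coeff m f ≠ 0 → PS G S m := by
  have : f ∈ JI K G S ↔ f ∈ restrictSupport K {m | PS G S m} := Iff.rfl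
  rw [this, mem_restrictSupport_iff]
  constructor
  · intro h m hm
    exact h (by simpa using hm)
  · intro h m hm
    exact h m (by simpa using hm)

theorem PS_colon (G : SimpleGraph (Fin n)) (S : Set (Fin n)) (x : Fin n) (hx : x ∈ S)
    (m : Fin n →₀ ℕ) :
    PS G S (m + Finsupp.single x 1) ↔ PS G (S \ {v | G.Adj x v}) m := by
  have hval : ∀ v, (m + Finsupp.single x 1 : Fin n →₀ ℕ) v ≠ 0 ↔ m v ≠ 0 ∨ v = x := by
    intro v
    by_cases h : v = x
    · subst h; simp
    · simp [h]
  simp only [PS, hval]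
  constructor
  · rintro (⟨v, h1, h2⟩ | ⟨u, v, h1, h2, h3⟩)
    · rcases h2 with h2 | rfl
      · exact Or.inl ⟨v, fun h => h1 h.1, h2⟩
      · exact absurd hx h1
    · rcases h2 with h2 | rfl
      · rcases h3 with h3 | rfl
        · exact Or.inr ⟨u, v, h1, h2, h3⟩
        · exact Or.inl ⟨u, fun h => h.2 h1.symm, h2⟩
      · rcases h3 with h3 | rfl
        · exact Or.inl ⟨v, fun h => h.2 h1, h3⟩
        · exact absurd h1 (G.irrefl)
  · rintro (⟨v, h1, h2⟩ | ⟨u, v, h1, h2, h3⟩)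
    · by_cases hv : v ∈ S
      · have : G.Adj x v := by
          by_contra hc
          exact h1 ⟨hv, hc⟩
        exact Or.inr ⟨x, v, this, Or.inr rfl, Or.inl h2⟩
      · exact Or.inl ⟨v, hv, Or.inl h2⟩
    · exact Or.inr ⟨u, v, h1, Or.inl h2, Or.inl h3⟩

theorem PS_add (G : SimpleGraph (Fin n)) (S : Set (Fin n)) (x : Fin n)
    (m : Fin n →₀ ℕ) : PS G (S \ {x}) m → m x = 0 → PS G S m := by
  rintro (⟨v, h1, h2⟩ | h) hx
  · refine Or.inl ⟨v, fun h => h1 ⟨h, ?_⟩, h2⟩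
    rintro rfl
    exact h2 hx
  · exact Or.inr h

theorem PS_mono (G : SimpleGraph (Fin n)) {S T : Set (Fin n)} (h : T ⊆ S)
    (m : Fin n →₀ ℕ) : PS G S m → PS G T m := by
  rintro (⟨v, h1, h2⟩ | h')
  · exact Or.inl ⟨v, fun hv => h1 (h hv), h2⟩
  · exact Or.inr h'

theorem JI_mono (G : SimpleGraph (Fin n)) {S T : Set (Fin n)} (h : T ⊆ S) :
    JI K G S ≤ JI K G T := by
  intro f hf
  rw [mem_JI] at hf ⊢
  exact fun m hm => PS_mono G h m (hf m hm)

theorem JI_colon (G : SimpleGraph (Fin n)) (S : Set (Fin n)) (x : Fin n) (hx : x ∈ S)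
    (f : MvPolynomial (Fin n) K) : X x * f ∈ JI K G S ↔ f ∈ JI K G (S \ {v | G.Adj x v}) := by
  rw [mem_JI, mem_JI]
  constructor
  · intro h m hm
    rw [← PS_colon G S x hx]
    apply h
    rw [add_comm, coeff_X_mul]
    exact hm
  · intro h m hm
    rw [coeff_X_mul'] at hm
    split_ifs at hm with hc
    · have h1 := h _ hm
      rw [← PS_colon G S x hx] at h1
      have h2 : m - Finsupp.single x 1 + Finsupp.single x 1 = m := by
        apply tsub_add_cancel_of_le
        rw [Finsupp.single_le_iff]
        have : m x ≠ 0 := by simpa using hc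
        omega
      rwa [h2] at h1
    · exact absurd rfl hm

theorem X_mul_mem_del (G : SimpleGraph (Fin n)) (S : Set (Fin n)) (x : Fin n)
    (f : MvPolynomial (Fin n) K) : X x * f ∈ JI K G (S \ {x}) := by
  rw [mem_JI]
  intro m hm
  rw [coeff_X_mul'] at hm
  split_ifs at hm with hc
  · exact Or.inl ⟨x, fun h => h.2 rfl, by simpa using hc⟩
  · exact absurd rfl hm

theorem JI_div (G : SimpleGraph (Fin n)) (S : Set (Fin n)) (x : Fin n)
    (f : MvPolynomial (Fin n) K) (hf : f ∈ JI K G (S \ {x})) :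
    X x * (f.divMonomial (Finsupp.single x 1)) - f ∈ JI K G S := by
  have h1 : X x * (f.divMonomial (Finsupp.single x 1)) - f
      = - f.modMonomial (Finsupp.single x 1) := by
    have := divMonomial_add_modMonomial_single f x
    linear_combination this
  rw [h1, neg_mem_iff]
  rw [mem_JI] at hf ⊢
  intro m hm
  by_cases hle : Finsupp.single x 1 ≤ m
  · rw [coeff_modMonomial_of_le _ hle] at hm
    exact absurd rfl hm
  · rw [coeff_modMonomial_of_not_le _ hle] at hm
    refine PS_add G S x m (hf m hm) ?_
    by_contra hne
    apply hle
    rw [Finsupp.single_le_iff]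
    omega

theorem homog_div (x : Fin n) (f : MvPolynomial (Fin n) K) (d : ℕ) (hf : f.IsHomogeneous (d + 1)) :
    (f.divMonomial (Finsupp.single x 1)).IsHomogeneous d := by
  intro m hm
  rw [coeff_divMonomial] at hm
  have := hf hm
  rw [Finsupp.weight_apply] at this ⊢
  rw [Finsupp.sum_add_index' (by simp) (by intros; simp [add_mul])] at this
  simp at this ⊢
  omega

theorem homog_div_zero (x : Fin n) (f : MvPolynomial (Fin n) K) (hf : f.IsHomogeneous 0) :
    f.divMonomial (Finsupp.single x 1) = 0 := by
  ext m
  rw [coeff_divMonomial, coeff_zero]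
  by_contra hm
  have := hf hm
  rw [Finsupp.weight_apply] at this
  rw [Finsupp.sum_add_index' (by simp) (by intros; simp [add_mul])] at this
  simp at this

theorem ses_JI (G : SimpleGraph (Fin n)) (S : Set (Fin n)) (x : Fin n) (hx : x ∈ S) :
    ∃ i p, SES (quotGr (JI K G (S \ {v | G.Adj x v}))).shift (quotGr (JI K G S))
      (quotGr (JI K G (S \ {x}))) i p := by
  have hA : JI K G (S \ {v | G.Adj x v}) ≤ Submodule.comap
      (LinearMap.mulLeft (MvPolynomial (Fin n) K) (X x : MvPolynomial (Fin n) K)) (JI K G S) := by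
    intro f hf
    exact (JI_colon G S x hx f).2 hf
  have hB : JI K G S ≤ Submodule.comap LinearMap.id (JI K G (S \ {x})) :=
    JI_mono G Set.sdiff_subset
  refine ⟨Submodule.mapQ _ _ _ hA, Submodule.mapQ _ _ _ hB, ?_⟩
  refine ⟨?_, ?_, ?_, ?_, ?_, ?_⟩
  · rw [injective_iff_map_eq_zero]
    intro a ha
    obtain ⟨f, rfl⟩ := Submodule.mkQ_surjective _ a
    rw [Submodule.mkQ_apply, Submodule.mapQ_apply, Submodule.Quotient.mk_eq_zero] at ha
    rw [Submodule.mkQ_apply, Submodule.Quotient.mk_eq_zero]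
    exact (JI_colon G S x hx f).1 ha
  · intro d a ha
    match d, ha with
    | none, _ => trivial
    | some 0, ha =>
      have : a = 0 := ha
      rw [this, map_zero]; exact zero_mem _
    | some (d + 1), ha =>
      obtain ⟨f, hf, rfl⟩ := ha
      refine ⟨X x * f, ?_, rfl⟩
      have := (isHomogeneous_X K x).mul (show f.IsHomogeneous d from hf)
      change (X x * f).IsHomogeneous (d + 1)
      rwa [add_comm]
  · intro d b hb
    match d, hb with
    | none, _ => trivial
    | some d, hb =>
      obtain ⟨f, hf, rfl⟩ := hb
      exact ⟨f, hf, rfl⟩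
  · intro a
    obtain ⟨f, rfl⟩ := Submodule.mkQ_surjective _ a
    rw [Submodule.mkQ_apply, Submodule.mapQ_apply, Submodule.mapQ_apply,
      Submodule.Quotient.mk_eq_zero]
    exact X_mul_mem_del G S x f
  · have key : ∀ f : MvPolynomial (Fin n) K, Submodule.mapQ _ _ _ hB (Submodule.mkQ _ f) = 0 →
        Submodule.mapQ _ _ _ hA (Submodule.mkQ _ (f.divMonomial (Finsupp.single x 1))) =
          Submodule.mkQ _ f := by
      intro f hf
      rw [Submodule.mkQ_apply, Submodule.mapQ_apply, Submodule.Quotient.mk_eq_zero] at hf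
      rw [Submodule.mkQ_apply, Submodule.mkQ_apply, Submodule.mapQ_apply, Submodule.Quotient.eq]
      exact JI_div G S x f hf
    intro d b hb hb0
    match d, hb with
    | none, _ =>
      obtain ⟨f, rfl⟩ := Submodule.mkQ_surjective _ b
      exact ⟨_, trivial, key f hb0⟩
    | some 0, hb =>
      obtain ⟨f, hf, rfl⟩ := hb
      refine ⟨_, ?_, key f hb0⟩
      rw [homog_div_zero x f hf, map_zero]
      exact zero_mem _
    | some (d + 1), hb =>
      obtain ⟨f, hf, rfl⟩ := hb
      exact ⟨_, ⟨_, homog_div x f d hf, rfl⟩, key f hb0⟩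
  · intro d c hc
    match d, hc with
    | none, _ =>
      obtain ⟨f, rfl⟩ := Submodule.mkQ_surjective _ c
      exact ⟨Submodule.mkQ _ f, trivial, rfl⟩
    | some d, hc =>
      obtain ⟨f, hf, rfl⟩ := hc
      exact ⟨Submodule.mkQ _ f, ⟨f, hf, rfl⟩, rfl⟩

theorem res_bot : Res 1 0 _ (quotGr (JI K (⊥ : SimpleGraph (Fin n)) Set.univ)) := by
  have hJ : ∀ f ∈ JI K (⊥ : SimpleGraph (Fin n)) Set.univ, f = 0 := by
    intro f hf
    rw [mem_JI] at hf
    ext m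
    by_contra hm
    rcases hf m (by simpa using hm) with ⟨v, h, _⟩ | ⟨u, v, h, _⟩
    · exact h trivial
    · exact h
  refine ⟨1, fun _ => 0, (Submodule.mkQ _).comp (LinearMap.proj 0), fun _ => le_rfl, ?_, ?_, ?_⟩
  · intro d f hf
    match d, hf with
    | none, _ => trivial
    | some d, hf =>
      refine ⟨f 0, ?_, rfl⟩
      rcases hf 0 with h | h
      · rw [h]; exact zero_mem _
      · exact h.2
  · intro d y hy
    match d, hy with
    | none, _ =>
      obtain ⟨f, rfl⟩ := Submodule.mkQ_surjective _ y
      exact ⟨fun _ => f, trivial, rfl⟩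
    | some d, hy =>
      obtain ⟨f, hf, rfl⟩ := hy
      exact ⟨fun _ => f, fun j => Or.inr ⟨Nat.zero_le _, hf⟩, rfl⟩
  · change Subsingleton _
    refine subsingleton_of_forall_eq 0 fun z => ?_
    apply Subtype.ext
    have hz := z.2
    rw [LinearMap.mem_ker, LinearMap.comp_apply, Submodule.mkQ_apply,
      Submodule.Quotient.mk_eq_zero] at hz
    have := hJ _ hz
    funext j
    rw [Subsingleton.elim j 0]
    exact this

theorem res_vars (T : Finset (Fin n)) :
    ∃ l, Res l 0 _ (quotGr (JI K (⊥ : SimpleGraph (Fin n)) (Set.univ \ (T : Set (Fin n))))) := by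
  induction T using Finset.induction_on with
  | empty =>
    refine ⟨1, ?_⟩
    rw [Finset.coe_empty, Set.sdiff_empty]
    exact res_bot
  | insert x T hx ih =>
    obtain ⟨l, hl⟩ := ih
    obtain ⟨i, p, hS⟩ := ses_JI (K := K) (⊥ : SimpleGraph (Fin n)) (Set.univ \ (T : Set (Fin n))) x
      ⟨trivial, hx⟩
    have e1 : (Set.univ \ (T : Set (Fin n))) \ {v | (⊥ : SimpleGraph (Fin n)).Adj x v} =
        Set.univ \ (T : Set (Fin n)) := by
      ext v; simp
    have e2 : (Set.univ \ (T : Set (Fin n))) \ {x} =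
        Set.univ \ ((insert x T : Finset (Fin n)) : Set (Fin n)) := by
      ext v; simp; tauto
    rw [← e2]
    refine ⟨l + 1, cone hS ?_ hl.succ_l⟩
    rw [e1]
    exact hl.shift

theorem res_indep (G : SimpleGraph (Fin n)) (S : Set (Fin n))
    (hS : ∀ u v, u ∈ S → v ∈ S → ¬ G.Adj u v) : ∃ l, Res l 0 _ (quotGr (JI K G S)) := by
  classical
  have h := res_vars (K := K) (Finset.univ.filter (fun v => v ∉ S))
  have e1 : Set.univ \ ((Finset.univ.filter (fun v => v ∉ S) : Finset (Fin n)) : Set (Fin n)) = S := by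
    ext v; simp
  rw [e1] at h
  have e2 : JI K (⊥ : SimpleGraph (Fin n)) S = JI K G S := by
    ext f
    rw [mem_JI, mem_JI]
    refine forall_congr' fun m => imp_congr_right fun _ => ?_
    constructor
    · rintro (h | ⟨u, v, h, _⟩)
      · exact Or.inl h
      · exact absurd h (by simp)
    · rintro (h | ⟨u, v, h, h1, h2⟩)
      · exact Or.inl h
      · by_cases hu : u ∈ S
        · by_cases hv : v ∈ S
          · exact absurd h (hS u v hu hv)
          · exact Or.inl ⟨v, hv, h2⟩
        · exact Or.inl ⟨u, hu, h1⟩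
  rw [e2] at h
  exact h

theorem res_step (G : SimpleGraph (Fin n)) (S : Set (Fin n)) (x : Fin n) (k : ℕ)
    (h1 : ∃ l, Res l k _ (quotGr (JI K G (S \ {v | G.Adj x v}))))
    (h2 : ∃ l, Res l (k + 1) _ (quotGr (JI K G (S \ {x})))) :
    ∃ l, Res l (k + 1) _ (quotGr (JI K G S)) := by
  by_cases hx : x ∈ S
  · obtain ⟨l1, h1⟩ := h1
    obtain ⟨l2, h2⟩ := h2
    obtain ⟨i, p, hS⟩ := ses_JI (K := K) G S x hx
    exact ⟨max l1 l2, horseshoe hS (h1.shift.mono_l (le_max_left _ _))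
      (h2.mono_l (le_max_right _ _))⟩
  · rwa [Set.sdiff_singleton_eq_self hx] at h2

theorem res_main (G : SimpleGraph (Fin n)) (M : Finset (Sym2 (Fin n))) :
    (∀ e ∈ M, e ∈ G.edgeSet) → ∀ S : Set (Fin n),
    (∀ u v, u ∈ S → v ∈ S → G.Adj u v → ∃ e ∈ M, u ∈ e ∨ v ∈ e) →
    ∃ l, Res l M.card _ (quotGr (JI K G S)) := by
  induction M using Finset.induction_on with
  | empty =>
    intro _ S hS
    refine res_indep G S fun u v hu hv huv => ?_
    obtain ⟨e, he, _⟩ := hS u v hu hv huv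
    simp at he
  | insert e M he ih =>
    intro hM S hS
    have hM' : ∀ e ∈ M, e ∈ G.edgeSet := fun f hf => hM f (Finset.mem_insert_of_mem hf)
    have hxy := hM e (Finset.mem_insert_self _ _)
    rw [Finset.card_insert_of_notMem he]
    induction e using Sym2.ind with
    | _ x y =>
    rw [SimpleGraph.mem_edgeSet] at hxy
    have hS' : ∀ T : Set (Fin n), T ⊆ S → (∀ u v, u ∈ T → v ∈ T → G.Adj u v → u ≠ x ∧ u ≠ y) →
        ∃ l, Res l M.card _ (quotGr (JI K G T)) := by
      intro T hT hne
      refine ih hM' T fun u v hu hv huv => ?_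
      obtain ⟨f, hf, hfu⟩ := hS u v (hT hu) (hT hv) huv
      rcases Finset.mem_insert.1 hf with rfl | hf
      · exfalso
        have h1 := hne u v hu hv huv
        have h2 := hne v u hv hu huv.symm
        simp only [Sym2.mem_iff] at hfu
        tauto
      · exact ⟨f, hf, hfu⟩
    refine res_step G S x _ (hS' _ Set.sdiff_subset ?_) (res_step G _ y _ (hS' _ ?_ ?_) ?_)
    · intro u v hu hv huv
      refine ⟨?_, ?_⟩
      · rintro rfl; exact hv.2 huv
      · rintro rfl; exact hu.2 hxy
    · exact Set.sdiff_subset.trans Set.sdiff_subset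
    · intro u v hu hv huv
      refine ⟨?_, ?_⟩
      · rintro rfl; exact hu.1.2 rfl
      · rintro rfl; exact hv.2 huv
    · obtain ⟨l, hl⟩ := hS' ((S \ {x}) \ {y}) (Set.sdiff_subset.trans Set.sdiff_subset) (by
        intro u v hu hv huv
        exact ⟨fun h => hu.1.2 h, fun h => hu.2 h⟩)
      exact ⟨l, hl.mono_r (Nat.le_succ _)⟩

theorem JI_univ (G : SimpleGraph (Fin n)) : JI K G Set.univ = graphIdeal K G := by
  have hg : graphIdeal K G = Ideal.span ((fun s => monomial s (1 : K)) ''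
      {m : Fin n →₀ ℕ | ∃ u v, G.Adj u v ∧ m = Finsupp.single u 1 + Finsupp.single v 1}) := by
    unfold graphIdeal
    congr 1
    ext f
    constructor
    · rintro ⟨u, v, h, rfl⟩
      exact ⟨_, ⟨u, v, h, rfl⟩, by simp [X, monomial_mul]⟩
    · rintro ⟨_, ⟨u, v, h, rfl⟩, rfl⟩
      exact ⟨u, v, h, by simp [X, monomial_mul]⟩
  rw [hg]
  ext f
  rw [mem_JI, mem_ideal_span_monomial_image]
  refine forall_congr' fun m => ?_
  rw [mem_support_iff]
  refine imp_congr_right fun _ => ?_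
  constructor
  · rintro (⟨v, h, _⟩ | ⟨u, v, h, hu, hv⟩)
    · exact absurd trivial h
    · refine ⟨_, ⟨u, v, h, rfl⟩, ?_⟩
      intro w
      have hne := h.ne
      by_cases hwu : w = u
      · subst hwu
        simp [Finsupp.single_apply, hne.symm]
        omega
      · by_cases hwv : w = v
        · subst hwv
          simp [Finsupp.single_apply, hne]
          omega
        · simp [Finsupp.single_apply, Ne.symm hwu, Ne.symm hwv]
  · rintro ⟨_, ⟨u, v, h, rfl⟩, hle⟩
    refine Or.inr ⟨u, v, h, ?_, ?_⟩
    · have := hle u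
      simp at this
      omega
    · have := hle v
      simp at this
      omega

theorem Res.chain {l : ℕ} : ∀ {r : ℕ} {M : Type} [AddCommGroup M]
    [Module (MvPolynomial (Fin n) K) M] {G : Gr n K M}, Res l r M G →
    ∃ (rk : ℕ → ℕ) (tw : (i : ℕ) → Fin (rk i) → ℕ)
      (δ : (i : ℕ) → ((Fin (rk (i + 1)) → MvPolynomial (Fin n) K) →ₗ[MvPolynomial (Fin n) K]
        (Fin (rk i) → MvPolynomial (Fin n) K)))
      (φ : (Fin (rk 0) → MvPolynomial (Fin n) K) →ₗ[MvPolynomial (Fin n) K] M),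
      (∀ i, l < i → rk i = 0) ∧
      (∀ i k, HomD (rk i) (tw i) (some (tw (i + 1) k)) (δ i (Pi.single k 1))) ∧
      (∀ j, φ (Pi.single j 1) ∈ G.g (some (tw 0 j))) ∧
      Function.Surjective φ ∧
      LinearMap.range (δ 0) = LinearMap.ker φ ∧
      (∀ i, LinearMap.range (δ (i + 1)) = LinearMap.ker (δ i)) ∧
      (∀ i j, tw i j ≤ r + i) := by
  induction l with
  | zero =>
    intro r M _ _ G hR
    have hR' : Subsingleton M := hR
    refine ⟨fun _ => 0, fun _ _ => 0, fun _ => 0, 0, fun _ _ => rfl, fun _ k => k.elim0,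
      fun k => k.elim0, fun y => ⟨0, Subsingleton.elim _ _⟩, Subsingleton.elim _ _,
      fun _ => Subsingleton.elim _ _, fun _ j => j.elim0⟩
  | succ l ih =>
    intro r M _ _ G hR
    obtain ⟨m, t, φ, h1, h2, h3, h4⟩ := hR
    obtain ⟨rk, tw, δ, ψ, c1, c2, c3, c4, c5, c6, c7⟩ := ih h4
    refine ⟨fun i => Nat.casesOn i m rk, fun i => match i with
      | 0 => t
      | i + 1 => tw i, fun i => match i with
      | 0 => (Submodule.subtype _).comp ψ
      | i + 1 => δ i, φ, ?_, ?_, ?_, ?_, ?_, ?_, ?_⟩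
    · intro i hi
      match i, hi with
      | i + 1, hi => exact c1 i (by omega)
    · intro i k
      match i, k with
      | 0, k => exact c3 k
      | i + 1, k => exact c2 i k
    · intro j
      exact h2 _ _ (homD_single m t j)
    · intro y
      obtain ⟨f, _, hf⟩ := h3 none y (G.g_none y)
      exact ⟨f, hf⟩
    · change LinearMap.range ((Submodule.subtype _).comp ψ) = LinearMap.ker φ
      rw [LinearMap.range_comp, LinearMap.range_eq_top.2 c4, Submodule.map_top,
        Submodule.range_subtype]
    · intro i
      match i with
      | 0 =>
        change LinearMap.range (δ 0) = LinearMap.ker ((Submodule.subtype _).comp ψ)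
        rw [LinearMap.ker_comp_of_ker_eq_bot _ (Submodule.ker_subtype _)]
        exact c5
      | i + 1 => exact c6 i
    · intro i j
      match i, j with
      | 0, j => exact h1 j
      | i + 1, j =>
        have := c7 i j
        change tw i j ≤ r + (i + 1)
        omega

theorem exists_GFR {l r : ℕ} (I : Ideal (MvPolynomial (Fin n) K)) (h : Res l r _ (quotGr I)) :
    ∃ F : GFR n K I, ∀ (i : ℕ) (j : Fin (F.rk i)), F.tw i j ≤ r + i := by
  obtain ⟨rk, tw, δ, φ, c1, c2, c3, c4, c5, c6, c7⟩ := h.chain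
  have hv : ∀ j, ∃ f : MvPolynomial (Fin n) K, f.IsHomogeneous (tw 0 j) ∧
      Submodule.mkQ I f = φ (Pi.single j 1) := fun j => (mem_quotGr I _ _).1 (c3 j)
  choose v hv1 hv2 using hv
  have hφ : (Submodule.mkQ I).comp (Fintype.linearCombination (MvPolynomial (Fin n) K) v) = φ := by
    refine LinearMap.pi_ext' fun j => ?_
    ext
    simp only [LinearMap.comp_apply, LinearMap.single_apply, Fintype.linearCombination_apply_single,
      one_smul, hv2]
  refine ⟨{ len := l, rk := rk, rk_zero := c1, tw := tw, δ := δ, δ_homog := fun i k j => c2 i k j,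
            aug := Fintype.linearCombination (MvPolynomial (Fin n) K) v, aug_homog := ?_,
            aug_surj := ?_, exact_zero := ?_, exact_succ := c6 }, c7⟩
  · intro j
    rw [Fintype.linearCombination_apply_single, one_smul]
    exact hv1 j
  · intro f
    obtain ⟨x, hx⟩ := c4 (Submodule.mkQ I f)
    refine ⟨x, ?_⟩
    rw [← hφ] at hx
    exact (Submodule.Quotient.eq I).1 hx.symm
  · rw [c5, ← hφ, LinearMap.ker_comp, Submodule.ker_mkQ]

theorem exists_maximal (G : SimpleGraph (Fin n)) :
    ∃ M : Finset (Sym2 (Fin n)), G.IsMaximalMatchingSet M := by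
  classical
  have hne : {M : Finset (Sym2 (Fin n)) | G.IsMatchingSet M}.Nonempty := ⟨∅, by simp [SimpleGraph.IsMatchingSet]⟩
  obtain ⟨M, hM⟩ := (Set.toFinite {M : Finset (Sym2 (Fin n)) | G.IsMatchingSet M}).exists_maximal hne
  refine ⟨M, hM.1, fun e _ heM h => heM ?_⟩
  exact hM.2 h (Finset.subset_insert e M) (Finset.mem_insert_self e M)

end Helpers

/-- For any graph `G`, `reg(R/I(G)) ≤ β'(G)`, the minimum size of a
maximal matching of `G`. -/
theorem stmt_8 (K : Type) [Field K] {n : ℕ} (G : SimpleGraph (Fin n)) :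
    regR (graphIdeal K G) ≤ betaPrime G := by
  have hne : {k : ℕ | ∃ M : Finset (Sym2 (Fin n)), G.IsMaximalMatchingSet M ∧ M.card = k}.Nonempty := by
    obtain ⟨M, hM⟩ := exists_maximal G
    exact ⟨M.card, M, hM, rfl⟩
  obtain ⟨M, hM, hcard⟩ := Nat.sInf_mem hne
  have hcard' : M.card = betaPrime G := hcard
  rw [← hcard']
  obtain ⟨l, hl⟩ := res_main (K := K) G M hM.1.1 Set.univ (by
    intro u v _ _ huv
    by_contra hc
    push Not at hc
    refine hM.2 s(u, v) huv (fun h => (hc _ h).1 (Sym2.mem_mk_left u v)) ⟨?_, ?_⟩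
    · intro e he
      rcases Finset.mem_insert.1 he with rfl | he
      · exact huv
      · exact hM.1.1 e he
    · have key : ∀ e ∈ M, ∀ w, ¬ (w ∈ s(u, v) ∧ w ∈ e) := by
        rintro e he w ⟨h1, h2⟩
        rcases Sym2.mem_iff.1 h1 with rfl | rfl
        · exact (hc e he).1 h2
        · exact (hc e he).2 h2
      intro e he f hf hef w
      rcases Finset.mem_insert.1 he with rfl | he' <;> rcases Finset.mem_insert.1 hf with rfl | hf'
      · exact absurd rfl hef
      · exact key f hf' w
      · exact fun h => key e he' w h.symm
      · exact hM.1.2 e he' f hf' hef w)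
  rw [JI_univ] at hl
  exact Nat.sInf_le (exists_GFR _ hl)
end
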